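/- For sufficiently large y, any interval [x − y, x] with x ≥ y + 1 contains a set S of pairwise coprime integers of size ≫ √y / log y such that every element of S has at most (2 log x)/(log y) + O(log x / (log y)²) prime factors counted with multiplicity. -/

import Mathlib

open Real

/-!
A linear sieve lower bound, uniform in the position of the interval, produces `≫ y / log² y`
integers in `(x - y, x]` without prime factors below `z`, where `log z = (log y) / 2 - O(1)`.
The linear sieve upper bound shows that `≪ y ^ (3 / 2) / log³ y` pairs of them have a common prime
factor, so Turán's theorem gives `≫ √y / log y` of them that are pairwise coprime, and an integer
`n ≤ x` without prime factors below `z` has at most `log x / log z` prime factors.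

The bounded loss in `log z` requires sieve bounds in which the lower sieve function `f s`, zero at
`s = 2`, beats the error terms already at `s = 2 + O(1 / log z)`. They are proved by induction on
the sifting primes, removed one at a time with Buchstab's identity. With `v ≈ 1 / log z`, the upper
estimate is `X * (v * F s - β * v³ * H s + M * v³ * exp (-s))` at `s = v * (log X - shift)`, and the
lower estimate is of the same shape. The strict monotonicity of `F` and `f` absorbs the error of a
step for bounded `s` through a small increase of the shift, and the exponential term absorbs it for
large `s`. The coefficient `β` is a potential collecting the second-order errors of Mertens'
theorem; it stays bounded by an elementary formula of Selberg type,
`∑ log² p / (p - 1) = (∑ log p / (p - 1))² / 2 + O(1)`.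
-/

namespace LinearSieve

/-- Picard iterates for the delay equation `s * r' (s + 1) = σ * r s` with initial condition `r = 1`
on `(-∞, 2]`. The two occurrences of `max` only extend the equation to all real arguments. -/
noncomputable def delayIterate (σ : ℝ) : ℕ → ℝ → ℝ
  | 0, _ => 1
  | n + 1, s => 1 + σ * ∫ u in (2 : ℝ)..max s 2, delayIterate σ n (u - 1) / max (u - 1) 1

/-- The solution `r` of `r = 1` on `(-∞, 2]`, `r' s = σ * r (s - 1) / (s - 1)` on `(2, ∞)`. On
`(-∞, n + 2]` it agrees with the `n`-th Picard iterate. -/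
noncomputable def delaySolution (σ s : ℝ) : ℝ := delayIterate σ ⌈s⌉₊ s

section DelayEquation

variable (σ : ℝ)

lemma continuous_shift_div_max {r : ℝ → ℝ} (hr : Continuous r) :
    Continuous fun u : ℝ => r (u - 1) / max (u - 1) 1 :=
  (hr.comp (continuous_sub_right 1)).div (by fun_prop) fun _ =>
    (one_pos.trans_le (le_max_right _ _)).ne'

lemma continuous_delayIterate (n : ℕ) : Continuous (delayIterate σ n) := by
  induction n with
  | zero => exact continuous_const
  | succ n ih =>
    have primitive := intervalIntegral.continuous_primitive (μ := MeasureTheory.volume)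
      (fun a b => (continuous_shift_div_max ih).intervalIntegrable a b) 2
    exact continuous_const.add
      (continuous_const.mul (primitive.comp (continuous_id.max continuous_const)))

lemma integral_shift_div_max_congr {r₁ r₂ : ℝ → ℝ} {s t : ℝ} (hs : max s 2 ≤ t)
    (h : ∀ u ≤ t - 1, r₁ u = r₂ u) :
    ∫ u in (2 : ℝ)..max s 2, r₁ (u - 1) / max (u - 1) 1 =
      ∫ u in (2 : ℝ)..max s 2, r₂ (u - 1) / max (u - 1) 1 := by
  refine intervalIntegral.integral_congr fun u hu => ?_
  rw [Set.uIcc_of_le (le_max_right _ _)] at hu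
  simp only [h (u - 1) (by linarith [hu.2])]

lemma delayIterate_succ_of_le (n : ℕ) :
    ∀ s : ℝ, s ≤ n + 2 → delayIterate σ (n + 1) s = delayIterate σ n s := by
  induction n with
  | zero =>
    intro s hs
    simp [delayIterate, max_eq_right (by simpa using hs : s ≤ 2)]
  | succ n ih =>
    intro s hs
    have hmax : max s 2 ≤ n + 3 :=
      max_le (by push_cast at hs; linarith) (by linarith [n.cast_nonneg (α := ℝ)])
    rw [delayIterate, integral_shift_div_max_congr hmax fun u hu => ih u (by linarith)]
    rfl

lemma delayIterate_of_le {n m : ℕ} (hnm : n ≤ m) {s : ℝ} (hs : s ≤ n + 2) :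
    delayIterate σ m s = delayIterate σ n s := by
  induction m, hnm using Nat.le_induction with
  | base => rfl
  | succ m hnm ih =>
    have : (n : ℝ) ≤ m := mod_cast hnm
    rw [delayIterate_succ_of_le σ m s (by linarith), ih]

lemma delaySolution_eq_delayIterate {n : ℕ} {s : ℝ} (hs : s ≤ n + 2) :
    delaySolution σ s = delayIterate σ n s := by
  have hceil : s ≤ ⌈s⌉₊ + 2 := by linarith [Nat.le_ceil s]
  rcases le_total n ⌈s⌉₊ with h | h
  · exact delayIterate_of_le σ h hs
  · exact (delayIterate_of_le σ h hceil).symm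

lemma continuous_delaySolution : Continuous (delaySolution σ) := by
  refine continuous_iff_continuousAt.mpr fun s => ?_
  have hs : s < ⌈s⌉₊ + 2 := by linarith [Nat.le_ceil s]
  refine (continuous_delayIterate σ ⌈s⌉₊).continuousAt.congr ?_
  filter_upwards [Iio_mem_nhds hs] with x hx
  exact (delaySolution_eq_delayIterate σ hx.le).symm

lemma intervalIntegrable_delaySolution (a b : ℝ) :
    IntervalIntegrable (delaySolution σ) MeasureTheory.volume a b :=
  (continuous_delaySolution σ).intervalIntegrable a b

lemma delaySolution_eq_integral (s : ℝ) :
    delaySolution σ s =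
      1 + σ * ∫ u in (2 : ℝ)..max s 2, delaySolution σ (u - 1) / max (u - 1) 1 := by
  have hs := Nat.le_ceil s
  have hmax : max s 2 ≤ ⌈s⌉₊ + 3 :=
    max_le (by linarith) (by linarith [Nat.cast_nonneg (α := ℝ) ⌈s⌉₊])
  have hcongr := integral_shift_div_max_congr hmax fun u hu =>
    delaySolution_eq_delayIterate σ (n := ⌈s⌉₊) (by linarith : u ≤ ⌈s⌉₊ + 2)
  rw [delaySolution_eq_delayIterate σ (n := ⌈s⌉₊ + 1) (by push_cast; linarith), delayIterate,
    hcongr]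

lemma delaySolution_of_le_two {s : ℝ} (hs : s ≤ 2) : delaySolution σ s = 1 := by
  rw [delaySolution_eq_integral, max_eq_right hs, intervalIntegral.integral_same, mul_zero,
    add_zero]

lemma hasDerivAt_delaySolution {s : ℝ} (hs : 2 < s) :
    HasDerivAt (delaySolution σ) (σ * (delaySolution σ (s - 1) / (s - 1))) s := by
  have hcont := continuous_shift_div_max (continuous_delaySolution σ)
  have h := ((intervalIntegral.integral_hasDerivAt_right (hcont.intervalIntegrable 2 s)
    (hcont.stronglyMeasurableAtFilter _ _) hcont.continuousAt).const_mul σ).const_add 1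
  rw [max_eq_left (by linarith : (1 : ℝ) ≤ s - 1)] at h
  refine h.congr_of_eventuallyEq ?_
  filter_upwards [Ioi_mem_nhds hs] with x hx
  rw [delaySolution_eq_integral, max_eq_left hx.le]

end DelayEquation

lemma pos_of_forall_lt_pos {g : ℝ → ℝ} {a : ℝ} (hg : ContinuousOn g (Set.Ici a))
    (h : ∀ s, a ≤ s → (∀ u, a ≤ u → u < s → 0 < g u) → 0 < g s) {s : ℝ} (hs : a ≤ s) :
    0 < g s := by
  by_contra! hgs
  let B : Set ℝ := Set.Ici a ∩ g ⁻¹' Set.Iic 0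
  have hclosed : IsClosed B := hg.preimage_isClosed_of_isClosed isClosed_Ici isClosed_Iic
  have hbdd : BddBelow B := ⟨a, fun x hx => hx.1⟩
  have hmin : sInf B ∈ B := hclosed.csInf_mem ⟨s, hs, hgs⟩ hbdd
  refine (h (sInf B) hmin.1 fun u hau hu => ?_).not_ge hmin.2
  by_contra! hgu
  exact hu.not_ge (csInf_le hbdd ⟨hau, hgu⟩)

section NegOne

local notation "r" => delaySolution (-1)

lemma hasDerivAt_sub_one_mul_delaySolution_neg_one {s : ℝ} (hs : 2 < s) :
    HasDerivAt (fun t => (t - 1) * r t) (r s - r (s - 1)) s := by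
  refine (((hasDerivAt_id s).sub_const 1).mul (hasDerivAt_delaySolution (-1) hs)).congr_deriv ?_
  have : s - 1 ≠ 0 := by linarith
  simp only [id]
  field_simp
  ring

lemma sub_one_mul_delaySolution_neg_one {s : ℝ} (hs : 2 ≤ s) :
    (s - 1) * r s = ∫ u in (s - 1)..s, r u := by
  have hr := continuous_delaySolution (-1)
  have hri := intervalIntegrable_delaySolution (-1)
  have hshift : Continuous fun u : ℝ => r (u - 1) := hr.comp (continuous_sub_right 1)
  have htotal : ∫ u in (2 : ℝ)..s, (r u - r (u - 1)) = (s - 1) * r s - (2 - 1) * r 2 :=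
    intervalIntegral.integral_eq_sub_of_hasDerivAt_of_le hs
      (((continuous_sub_right 1).mul hr).continuousOn)
      (fun x hx => hasDerivAt_sub_one_mul_delaySolution_neg_one hx.1)
      ((hr.sub hshift).intervalIntegrable _ _)
  have hinitial : ∫ u in (1 : ℝ)..2, r u = 1 := by
    rw [intervalIntegral.integral_congr (g := fun _ => (1 : ℝ))]
    · norm_num
    · intro u hu
      rw [Set.uIcc_of_le one_le_two] at hu
      exact delaySolution_of_le_two _ hu.2
  rw [intervalIntegral.integral_sub (hri _ _) (hshift.intervalIntegrable _ _),
    intervalIntegral.integral_comp_sub_right (fun u => r u),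
    delaySolution_of_le_two (-1) le_rfl] at htotal
  have h₁ := intervalIntegral.integral_add_adjacent_intervals (hri 1 2) (hri 2 s)
  have h₂ := intervalIntegral.integral_add_adjacent_intervals (hri 1 (s - 1)) (hri (s - 1) s)
  norm_num at htotal
  linarith

lemma delaySolution_neg_one_pos (s : ℝ) : 0 < r s := by
  have hsmall : ∀ {s : ℝ}, s ≤ 2 → 0 < r s := fun h => by
    rw [delaySolution_of_le_two _ h]; exact one_pos
  rcases le_total s 2 with h | h
  · exact hsmall h
  refine pos_of_forall_lt_pos (continuous_delaySolution _).continuousOn (fun t ht ih => ?_) h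
  have hpos : 0 < ∫ u in (t - 1)..t, r u :=
    intervalIntegral.intervalIntegral_pos_of_pos_on (intervalIntegrable_delaySolution _ _ _)
      (fun x hx => (le_total x 2).elim hsmall fun h => ih x h hx.2) (by linarith)
  rw [← sub_one_mul_delaySolution_neg_one ht] at hpos
  exact pos_of_mul_pos_right hpos (by linarith)

lemma antitone_delaySolution_neg_one : Antitone (delaySolution (-1)) := by
  refine AntitoneOn.Iic_union_Ici (a := 2) (fun x hx y hy _ => ?_)
    (antitoneOn_of_deriv_nonpos (convex_Ici 2) (continuous_delaySolution _).continuousOn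
      (fun x hx => ?_) fun x hx => ?_)
  · rw [delaySolution_of_le_two _ hx, delaySolution_of_le_two _ hy]
  · rw [interior_Ici] at hx
    exact (hasDerivAt_delaySolution _ hx).differentiableAt.differentiableWithinAt
  · rw [interior_Ici, Set.mem_Ioi] at hx
    rw [(hasDerivAt_delaySolution _ hx).deriv, neg_one_mul, Left.neg_nonpos_iff]
    exact div_nonneg (delaySolution_neg_one_pos _).le (by linarith)

lemma delaySolution_neg_one_le_one (s : ℝ) : r s ≤ 1 := by
  calc r s ≤ r (min s 2) := antitone_delaySolution_neg_one (min_le_left s 2)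
    _ = 1 := delaySolution_of_le_two (-1) (min_le_right s 2)

lemma sub_one_mul_delaySolution_neg_one_le {s : ℝ} (hs : 2 ≤ s) : (s - 1) * r s ≤ r (s - 1) := by
  rw [sub_one_mul_delaySolution_neg_one hs]
  calc ∫ u in (s - 1)..s, r u ≤ ∫ _ in (s - 1)..s, r (s - 1) :=
        intervalIntegral.integral_mono_on (by linarith) (intervalIntegrable_delaySolution _ _ _)
          intervalIntegrable_const fun x hx => antitone_delaySolution_neg_one hx.1
    _ = r (s - 1) := by simp

lemma exp_two_le_nine : exp 2 ≤ 9 :=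
  calc exp 2 = exp 1 ^ 2 := by rw [← exp_nat_mul]; norm_num
    _ ≤ 3 ^ 2 := by gcongr; exact exp_one_lt_three.le
    _ = 9 := by norm_num

lemma delaySolution_neg_one_le_exp (s : ℝ) : r s ≤ exp (20 - 2 * s) := by
  suffices ∀ (n : ℕ) (t : ℝ), t ≤ 10 + n → r t ≤ exp (20 - 2 * t) from
    this ⌈s⌉₊ s (by linarith [Nat.le_ceil s])
  have hsmall : ∀ t : ℝ, t ≤ 10 → r t ≤ exp (20 - 2 * t) := fun t ht =>
    (delaySolution_neg_one_le_one t).trans (one_le_exp (by linarith))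
  intro n
  induction n with
  | zero => exact fun t ht => hsmall t (by simpa using ht)
  | succ n ih =>
    intro t ht
    rcases le_total t 10 with h | h
    · exact hsmall t h
    push_cast at ht
    have hchain :=
      calc 9 * r t ≤ (t - 1) * r t :=
            mul_le_mul_of_nonneg_right (by linarith) (delaySolution_neg_one_pos t).le
        _ ≤ r (t - 1) := sub_one_mul_delaySolution_neg_one_le (by linarith)
        _ ≤ exp (20 - 2 * (t - 1)) := ih (t - 1) (by linarith)
        _ = exp 2 * exp (20 - 2 * t) := by rw [← exp_add]; ring_nf
        _ ≤ 9 * exp (20 - 2 * t) := by gcongr; exact exp_two_le_nine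
    linarith

end NegOne

section MeanValue

variable {g g' : ℝ → ℝ} {x y C : ℝ}

lemma sub_le_mul_sub_of_hasDerivAt_le (hxy : x ≤ y) (hg : ContinuousOn g (Set.Icc x y))
    (hderiv : ∀ t ∈ Set.Ioo x y, HasDerivAt g (g' t) t) (hC : ∀ t ∈ Set.Ioo x y, g' t ≤ C) :
    g y - g x ≤ C * (y - x) := by
  rw [← interior_Icc] at hderiv hC
  exact (convex_Icc x y).image_sub_le_mul_sub_of_deriv_le hg
    (fun t ht => (hderiv t ht).differentiableAt.differentiableWithinAt)
    (fun t ht => (hderiv t ht).deriv ▸ hC t ht) x ⟨le_rfl, hxy⟩ y ⟨hxy, le_rfl⟩ hxy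

lemma mul_sub_le_sub_of_le_hasDerivAt (hxy : x ≤ y) (hg : ContinuousOn g (Set.Icc x y))
    (hderiv : ∀ t ∈ Set.Ioo x y, HasDerivAt g (g' t) t) (hC : ∀ t ∈ Set.Ioo x y, C ≤ g' t) :
    C * (y - x) ≤ g y - g x := by
  have := sub_le_mul_sub_of_hasDerivAt_le hxy hg.neg (fun t ht => (hderiv t ht).neg)
    fun t ht => neg_le_neg (hC t ht)
  simp only [Pi.neg_apply] at this
  linarith

lemma abs_sub_sub_mul_le_of_hasDerivAt {E : ℝ → ℝ} {a : ℝ} (hg : ContinuousOn g (Set.Ici a))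
    (hderiv : ∀ t, a < t → HasDerivAt g (g' t) t) (hE : Antitone E) (hE_nonneg : ∀ t, 0 ≤ E t)
    (hlip : ∀ s t, a < s → s ≤ t → |g' s - g' t| ≤ E s * (t - s)) (hx : a ≤ x) (hy : a < y) :
    |g x - g y - g' y * (x - y)| ≤ E (min x y) * (x - y) ^ 2 := by
  have habs : |x - y| = max x y - min x y := (max_sub_min_eq_abs' x y).symm
  have ha : a ≤ min x y := le_min hx hy.le
  have hclose : ∀ t ∈ Set.Ioo (min x y) (max x y), |g' t - g' y| ≤ E (min x y) * |x - y| := by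
    rintro t ⟨hmin, hmax⟩
    rcases le_total t y with hty | hyt
    · calc |g' t - g' y| ≤ E t * (y - t) := hlip t y (ha.trans_lt hmin) hty
        _ ≤ E (min x y) * |x - y| := by
          rw [habs]
          exact mul_le_mul (hE hmin.le) (by linarith [le_max_right x y]) (by linarith)
            (hE_nonneg _)
    · rw [abs_sub_comm]
      calc |g' y - g' t| ≤ E y * (t - y) := hlip y t hy hyt
        _ ≤ E (min x y) * |x - y| := by
          rw [habs]
          exact mul_le_mul (hE (min_le_right x y)) (by linarith [min_le_right x y])
            (by linarith) (hE_nonneg _)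
  have hcont : ContinuousOn g (Set.Icc (min x y) (max x y)) :=
    hg.mono fun t ht => ha.trans ht.1
  have hd : ∀ t ∈ Set.Ioo (min x y) (max x y), HasDerivAt g (g' t) t := fun t ht =>
    hderiv t (ha.trans_lt ht.1)
  have upper := sub_le_mul_sub_of_hasDerivAt_le (C := g' y + E (min x y) * |x - y|)
    min_le_max hcont hd fun t ht => by linarith [(abs_le.mp (hclose t ht)).2]
  have lower := mul_sub_le_sub_of_le_hasDerivAt (C := g' y - E (min x y) * |x - y|)
    min_le_max hcont hd fun t ht => by linarith [(abs_le.mp (hclose t ht)).1]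
  rw [abs_le]
  rcases le_total x y with h | h
  · simp only [min_eq_left h, max_eq_right h, abs_of_nonpos (sub_nonpos.mpr h)] at upper lower ⊢
    constructor <;> linarith
  · simp only [min_eq_right h, max_eq_left h, abs_of_nonneg (sub_nonneg.mpr h)] at upper lower ⊢
    constructor <;> linarith

lemma abs_div_sub_div_le {p₁ p₂ K L : ℝ} (hx : 1 / 2 ≤ x) (hxy : x ≤ y)
    (hp : |p₁ - p₂| ≤ K * (y - x)) (hquot : |p₂ / y| ≤ L) :
    |p₁ / x - p₂ / y| ≤ 2 * (K + L) * (y - x) := by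
  have hx₀ : 0 < x := by linarith
  have hy₀ : y ≠ 0 := by linarith
  have hsplit : x * (p₁ / x - p₂ / y) = (p₁ - p₂) + p₂ / y * (y - x) := by
    field_simp
    ring
  have hbound : x * |p₁ / x - p₂ / y| ≤ (K + L) * (y - x) :=
    calc x * |p₁ / x - p₂ / y| = |(p₁ - p₂) + p₂ / y * (y - x)| := by
          rw [← hsplit, abs_mul, abs_of_pos hx₀]
      _ ≤ |p₁ - p₂| + |p₂ / y| * |y - x| := by rw [← abs_mul]; exact abs_add_le _ _
      _ ≤ K * (y - x) + L * (y - x) := by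
          rw [abs_of_nonneg (sub_nonneg.mpr hxy)]
          exact add_le_add hp (mul_le_mul_of_nonneg_right hquot (sub_nonneg.mpr hxy))
      _ = (K + L) * (y - x) := by ring
  have := mul_le_mul_of_nonneg_right hx (abs_nonneg (p₁ / x - p₂ / y))
  linarith

end MeanValue

/-- The function `s * F s`, where `F` is the upper function of the linear sieve. -/
noncomputable def upperNum (s : ℝ) : ℝ := (delaySolution 1 s + delaySolution (-1) s) / 2

/-- The function `s * f s`, where `f` is the lower function of the linear sieve. -/
noncomputable def lowerNum (s : ℝ) : ℝ := (delaySolution 1 s - delaySolution (-1) s) / 2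

/-- The upper function `F` of the linear sieve, normalised by `F s = 1 / s` on `(0, 3]` (the usual
normalisation has an extra factor `2 * exp γ`). -/
noncomputable def upperFun (s : ℝ) : ℝ := upperNum s / s

/-- The lower function `f` of the linear sieve, normalised like `upperFun`; it vanishes on
`(-∞, 2]`. -/
noncomputable def lowerFun (s : ℝ) : ℝ := lowerNum s / s

/-- The derivative of `upperFun` on `(0, ∞)`, read off from `(s * F s)' = f (s - 1)`. -/
noncomputable def upperFunDeriv (s : ℝ) : ℝ := (lowerFun (s - 1) - upperFun s) / s

/-- The derivative of `lowerFun`, read off from `(s * f s)' = F (s - 1)` for `2 < s`. At the corner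
`s = 2` it takes the value `0` of the left derivative. -/
noncomputable def lowerFunDeriv (s : ℝ) : ℝ :=
  if s ≤ 2 then 0 else (upperFun (s - 1) - lowerFun s) / s

section SieveFunctions

variable {r s x y : ℝ}

lemma continuous_lowerNum : Continuous lowerNum :=
  ((continuous_delaySolution 1).sub (continuous_delaySolution (-1))).div_const 2

lemma continuous_upperNum : Continuous upperNum :=
  ((continuous_delaySolution 1).add (continuous_delaySolution (-1))).div_const 2

lemma lowerNum_of_le_two (hs : s ≤ 2) : lowerNum s = 0 := by
  rw [lowerNum, delaySolution_of_le_two 1 hs, delaySolution_of_le_two (-1) hs, sub_self, zero_div]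

lemma lowerFun_of_le_two (hs : s ≤ 2) : lowerFun s = 0 := by
  rw [lowerFun, lowerNum_of_le_two hs, zero_div]

lemma upperNum_of_le_three (hs : s ≤ 3) : upperNum s = 1 := by
  have hcongr := integral_shift_div_max_congr (s := s) (max_le hs (by norm_num)) fun u hu =>
    (delaySolution_of_le_two 1 (by linarith : u ≤ 2)).trans
      (delaySolution_of_le_two (-1) (by linarith)).symm
  rw [upperNum, delaySolution_eq_integral 1, delaySolution_eq_integral (-1), hcongr]
  ring

lemma upperFun_of_le_three (hs : s ≤ 3) : upperFun s = 1 / s := by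
  rw [upperFun, upperNum_of_le_three hs]

lemma mul_upperFun (hs : s ≠ 0) : s * upperFun s = upperNum s := mul_div_cancel₀ _ hs

lemma mul_lowerFun (hs : s ≠ 0) : s * lowerFun s = lowerNum s := mul_div_cancel₀ _ hs

lemma upperFun_sub_lowerFun (s : ℝ) : upperFun s - lowerFun s = delaySolution (-1) s / s := by
  rw [upperFun, lowerFun, upperNum, lowerNum]
  ring

lemma hasDerivAt_upperNum (s : ℝ) : HasDerivAt upperNum (lowerFun (s - 1)) s := by
  rcases lt_or_ge s 3 with h | h
  · rw [lowerFun_of_le_two (by linarith)]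
    refine (hasDerivAt_const s (1 : ℝ)).congr_of_eventuallyEq ?_
    filter_upwards [Iio_mem_nhds h] with x hx using upperNum_of_le_three hx.le
  · refine (((hasDerivAt_delaySolution 1 (by linarith)).add
      (hasDerivAt_delaySolution (-1) (by linarith))).div_const 2).congr_deriv ?_
    rw [lowerFun, lowerNum]
    ring

lemma hasDerivAt_lowerNum (hs : 2 < s) : HasDerivAt lowerNum (upperFun (s - 1)) s := by
  refine (((hasDerivAt_delaySolution 1 hs).sub
    (hasDerivAt_delaySolution (-1) hs)).div_const 2).congr_deriv ?_
  rw [upperFun, upperNum]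
  ring

lemma hasDerivAt_upperFun (hs : 0 < s) : HasDerivAt upperFun (upperFunDeriv s) s := by
  refine ((hasDerivAt_upperNum s).div (hasDerivAt_id s) hs.ne').congr_deriv ?_
  rw [upperFunDeriv, upperFun]
  simp only [id]
  field_simp

lemma hasDerivAt_lowerFun (hs : 2 < s) : HasDerivAt lowerFun (lowerFunDeriv s) s := by
  have hs₀ : s ≠ 0 := by linarith
  refine ((hasDerivAt_lowerNum hs).div (hasDerivAt_id s) hs₀).congr_deriv ?_
  rw [lowerFunDeriv, if_neg hs.not_ge, lowerFun]
  simp only [id]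
  field_simp

lemma continuousOn_upperFun : ContinuousOn upperFun (Set.Ioi 0) := fun _ hs =>
  (hasDerivAt_upperFun hs).continuousAt.continuousWithinAt

lemma continuousOn_upperFun_sub_one : ContinuousOn (fun s => upperFun (s - 1)) (Set.Ici 2) :=
  continuousOn_upperFun.comp (continuous_sub_right 1).continuousOn fun s (hs : 2 ≤ s) =>
    show 0 < s - 1 by linarith

lemma continuous_lowerFun : Continuous lowerFun := by
  have h : lowerFun = fun s => lowerNum s / max s 1 := by
    funext s
    rcases le_total s 2 with hs | hs
    · rw [lowerFun, lowerNum_of_le_two hs, zero_div, zero_div]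
    · rw [lowerFun, max_eq_left (by linarith)]
  rw [h]
  exact continuous_lowerNum.div (by fun_prop) fun _ => (one_pos.trans_le (le_max_right _ _)).ne'

lemma continuous_lowerFun_sub_one : Continuous fun s => lowerFun (s - 1) :=
  continuous_lowerFun.comp (continuous_sub_right 1)

lemma monotoneOn_lowerFun_of_lt (h : ∀ u, 2 ≤ u → u < s → lowerFun u < upperFun (u - 1)) :
    MonotoneOn lowerFun (Set.Icc 2 s) := by
  refine monotoneOn_of_deriv_nonneg (convex_Icc 2 s) continuous_lowerFun.continuousOn
    (fun x hx => ?_) fun x hx => ?_ <;> rw [interior_Icc] at hx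
  · exact (hasDerivAt_lowerFun hx.1).differentiableAt.differentiableWithinAt
  · rw [(hasDerivAt_lowerFun hx.1).deriv, lowerFunDeriv, if_neg hx.1.not_ge]
    exact div_nonneg (sub_nonneg.mpr (h x hx.1.le hx.2).le) (by linarith [hx.1])

lemma antitoneOn_upperFun_of_lt (h : ∀ u, 2 ≤ u → u < s → lowerFun (u - 1) < upperFun u) :
    AntitoneOn upperFun (Set.Ioc 0 s) := by
  refine antitoneOn_of_deriv_nonpos (convex_Ioc 0 s) (continuousOn_upperFun.mono fun x hx => hx.1)
    (fun x hx => ?_) fun x hx => ?_ <;> rw [interior_Ioc] at hx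
  · exact (hasDerivAt_upperFun hx.1).differentiableAt.differentiableWithinAt
  · rw [(hasDerivAt_upperFun hx.1).deriv]
    refine div_nonpos_of_nonpos_of_nonneg (sub_nonpos.mpr ?_) hx.1.le
    rcases le_total 2 x with h₂ | h₂
    · exact (h x h₂ hx.2).le
    · rw [lowerFun_of_le_two (by linarith), upperFun_of_le_three (by linarith)]
      exact one_div_nonneg.mpr hx.1.le

lemma lowerFun_lt_upperFun_self (hs : 0 < s) : lowerFun s < upperFun s := by
  rw [← sub_pos, upperFun_sub_lowerFun]
  exact div_pos (delaySolution_neg_one_pos s) hs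

lemma lowerFun_sub_one_lt_and_lowerFun_lt (hs : 2 ≤ s) :
    lowerFun (s - 1) < upperFun s ∧ lowerFun s < upperFun (s - 1) := by
  suffices 0 < min (upperFun s - lowerFun (s - 1)) (upperFun (s - 1) - lowerFun s) by
    simpa only [lt_min_iff, sub_pos] using this
  refine pos_of_forall_lt_pos (a := 2) (g := fun s =>
    min (upperFun s - lowerFun (s - 1)) (upperFun (s - 1) - lowerFun s)) ?_ (fun t ht ih => ?_) hs
  · exact ((continuousOn_upperFun.mono fun x (hx : 2 ≤ x) => two_pos.trans_le hx).sub
      continuous_lowerFun_sub_one.continuousOn).inf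
      (continuousOn_upperFun_sub_one.sub continuous_lowerFun.continuousOn)
  · simp only [lt_min_iff, sub_pos] at ih ⊢
    have hmono := monotoneOn_lowerFun_of_lt fun u h₁ h₂ => (ih u h₁ h₂).2
    have hanti := antitoneOn_upperFun_of_lt fun u h₁ h₂ => (ih u h₁ h₂).1
    have hlt := lowerFun_lt_upperFun_self (two_pos.trans_le ht)
    refine ⟨lt_of_le_of_lt ?_ hlt, hlt.trans_le
      (hanti ⟨by linarith, by linarith⟩ ⟨by linarith, le_rfl⟩ (by linarith))⟩
    rcases le_total (t - 1) 2 with h | h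
    · rw [lowerFun_of_le_two h, ← lowerFun_of_le_two le_rfl]
      exact hmono ⟨le_rfl, ht⟩ ⟨ht, le_rfl⟩ ht
    · exact hmono ⟨h, by linarith⟩ ⟨ht, le_rfl⟩ (by linarith)

lemma monotone_lowerFun : Monotone lowerFun := by
  refine MonotoneOn.Iic_union_Ici (a := 2) (fun x hx y hy _ => ?_) fun x hx y hy hxy => ?_
  · rw [lowerFun_of_le_two hx, lowerFun_of_le_two hy]
  · exact monotoneOn_lowerFun_of_lt (fun u hu _ => (lowerFun_sub_one_lt_and_lowerFun_lt hu).2)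
      ⟨hx, hxy⟩ ⟨hy, le_rfl⟩ hxy

lemma antitoneOn_upperFun : AntitoneOn upperFun (Set.Ioi 0) := fun _ hx _ hy hxy =>
  antitoneOn_upperFun_of_lt (fun _ hu _ => (lowerFun_sub_one_lt_and_lowerFun_lt hu).1)
    ⟨hx, hxy⟩ ⟨hy, le_rfl⟩ hxy

lemma lowerFun_lt_upperFun (x : ℝ) (hy : 0 < y) : lowerFun x < upperFun y := by
  have hmax : 0 < max x y := lt_max_of_lt_right hy
  calc lowerFun x ≤ lowerFun (max x y) := monotone_lowerFun (le_max_left x y)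
    _ < upperFun (max x y) := lowerFun_lt_upperFun_self hmax
    _ ≤ upperFun y := antitoneOn_upperFun hy hmax (le_max_right x y)

lemma lowerFun_nonneg (s : ℝ) : 0 ≤ lowerFun s :=
  (lowerFun_of_le_two (min_le_right s 2)).ge.trans (monotone_lowerFun (min_le_left s 2))

lemma upperFunDeriv_neg (hs : 0 < s) : upperFunDeriv s < 0 :=
  div_neg_of_neg_of_pos (sub_neg.mpr (lowerFun_lt_upperFun _ hs)) hs

lemma lowerFunDeriv_of_le_two (hs : s ≤ 2) : lowerFunDeriv s = 0 := if_pos hs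

lemma lowerFunDeriv_of_two_lt (hs : 2 < s) :
    lowerFunDeriv s = (upperFun (s - 1) - lowerFun s) / s := if_neg hs.not_ge

lemma lowerFunDeriv_nonneg (s : ℝ) : 0 ≤ lowerFunDeriv s := by
  rcases le_or_gt s 2 with h | h
  · rw [lowerFunDeriv_of_le_two h]
  · rw [lowerFunDeriv_of_two_lt h]
    exact div_nonneg (sub_nonneg.mpr (lowerFun_lt_upperFun _ (by linarith)).le) (by linarith)

lemma upperNum_sub_le (hrs : r ≤ s) : upperNum s - upperNum r ≤ lowerFun (s - 1) * (s - r) :=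
  sub_le_mul_sub_of_hasDerivAt_le hrs continuous_upperNum.continuousOn
    (fun t _ => hasDerivAt_upperNum t) fun t ht => monotone_lowerFun (by linarith [ht.2])

lemma le_lowerNum_sub (hr : 2 ≤ r) (hrs : r ≤ s) :
    upperFun (s - 1) * (s - r) ≤ lowerNum s - lowerNum r :=
  mul_sub_le_sub_of_le_hasDerivAt hrs continuous_lowerNum.continuousOn
    (fun t ht => hasDerivAt_lowerNum (by linarith [ht.1])) fun t ht =>
      antitoneOn_upperFun (show 0 < t - 1 by linarith [ht.1]) (show 0 < s - 1 by linarith)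
        (by linarith [ht.2])

end SieveFunctions

section Decay

variable {r s x y : ℝ}

lemma exp_sub_two_mul_sub_one_le (c s : ℝ) : exp (c - 2 * (s - 1)) ≤ 9 * exp (c - 2 * s) := by
  rw [show c - 2 * (s - 1) = 2 + (c - 2 * s) by ring, exp_add]
  gcongr
  exact exp_two_le_nine

lemma exp_three_le : exp 3 ≤ 27 :=
  calc exp 3 = exp 1 ^ 3 := by rw [← exp_nat_mul]; norm_num
    _ ≤ 3 ^ 3 := by gcongr; exact exp_one_lt_three.le
    _ = 27 := by norm_num

lemma exp_sub_two_mul_le_of_le (hxy : x ≤ y) (c : ℝ) : exp (c - 2 * y) ≤ exp (c - 2 * x) :=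
  exp_le_exp.mpr (by linarith)

lemma upperFun_sub_add_upperFun_sub_le (hs : 2 ≤ s) :
    (upperFun s - lowerFun (s - 1)) + (upperFun (s - 1) - lowerFun s) ≤ 2 * exp (22 - 2 * s) := by
  have h₁ : delaySolution (-1) s / s ≤ delaySolution (-1) (s - 1) :=
    (div_le_self (delaySolution_neg_one_pos s).le (by linarith)).trans
      (antitone_delaySolution_neg_one (by linarith))
  have h₂ : delaySolution (-1) (s - 1) / (s - 1) ≤ delaySolution (-1) (s - 1) :=
    div_le_self (delaySolution_neg_one_pos _).le (by linarith)
  have h₃ := delaySolution_neg_one_le_exp (s - 1)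
  rw [show 20 - 2 * (s - 1) = 22 - 2 * s by ring] at h₃
  rw [← upperFun_sub_lowerFun] at h₁ h₂
  linarith

lemma abs_upperFunDeriv_le (hs : 1 / 2 ≤ s) : |upperFunDeriv s| ≤ 4 * exp (22 - 2 * s) := by
  have hs₀ : 0 < s := by linarith
  rw [abs_of_neg (upperFunDeriv_neg hs₀), upperFunDeriv, ← neg_div, neg_sub, div_le_iff₀ hs₀]
  rcases le_total s 2 with h | h
  · rw [lowerFun_of_le_two (by linarith), upperFun_of_le_three (by linarith), sub_zero]
    have hexp : 1 ≤ exp (22 - 2 * s) := one_le_exp (by linarith)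
    calc 1 / s ≤ 4 * 1 * s := by rw [div_le_iff₀ hs₀]; nlinarith
      _ ≤ 4 * exp (22 - 2 * s) * s := by gcongr
  · have hgap := upperFun_sub_add_upperFun_sub_le h
    have hpos := lowerFun_lt_upperFun s (by linarith : 0 < s - 1)
    nlinarith [exp_pos (22 - 2 * s)]

lemma lowerFunDeriv_le (s : ℝ) : lowerFunDeriv s ≤ 2 * exp (22 - 2 * s) := by
  rcases le_or_gt s 2 with h | h
  · rw [lowerFunDeriv_of_le_two h]
    positivity
  · rw [lowerFunDeriv_of_two_lt h, div_le_iff₀ (by linarith)]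
    have hgap := upperFun_sub_add_upperFun_sub_le h.le
    have hpos := lowerFun_lt_upperFun (s - 1) (by linarith : 0 < s)
    nlinarith [exp_pos (22 - 2 * s)]

lemma abs_upperFun_sub_le (hx : 1 / 2 ≤ x) (hxy : x ≤ y) :
    |upperFun x - upperFun y| ≤ 4 * exp (22 - 2 * x) * (y - x) := by
  have hx₀ : 0 < x := by linarith
  have hbound := mul_sub_le_sub_of_le_hasDerivAt (C := -(4 * exp (22 - 2 * x))) hxy
    (continuousOn_upperFun.mono fun t ht => hx₀.trans_le ht.1)
    (fun t ht => hasDerivAt_upperFun (hx₀.trans ht.1)) fun t ht => by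
      have := (abs_le.mp (abs_upperFunDeriv_le (hx.trans ht.1.le))).1
      linarith [exp_sub_two_mul_le_of_le ht.1.le 22]
  rw [abs_of_nonneg (sub_nonneg.mpr (antitoneOn_upperFun hx₀ (hx₀.trans_le hxy) hxy))]
  linarith

lemma lowerFun_max_two (s : ℝ) : lowerFun (max s 2) = lowerFun s := by
  rcases le_total s 2 with h | h
  · rw [max_eq_right h, lowerFun_of_le_two le_rfl, lowerFun_of_le_two h]
  · rw [max_eq_left h]

lemma abs_lowerFun_sub_le (hxy : x ≤ y) :
    |lowerFun x - lowerFun y| ≤ 2 * exp (22 - 2 * x) * (y - x) := by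
  have hmax : max x 2 ≤ max y 2 := max_le_max_right 2 hxy
  have hbound := sub_le_mul_sub_of_hasDerivAt_le (C := 2 * exp (22 - 2 * x)) hmax
    continuous_lowerFun.continuousOn
    (fun t ht => hasDerivAt_lowerFun ((le_max_right x 2).trans_lt ht.1)) fun t ht => by
      have := exp_sub_two_mul_le_of_le ((le_max_left x 2).trans ht.1.le) 22
      linarith [lowerFunDeriv_le t]
  rw [lowerFun_max_two, lowerFun_max_two] at hbound
  rw [abs_sub_comm, abs_of_nonneg (sub_nonneg.mpr (monotone_lowerFun hxy))]
  refine hbound.trans (mul_le_mul_of_nonneg_left ?_ (by positivity))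
  rcases le_total x 2 with h | h
  · rw [max_eq_right h]
    linarith [max_le (by linarith : y ≤ 2 + (y - x)) (by linarith : 2 ≤ 2 + (y - x))]
  · rw [max_eq_left h, max_eq_left (h.trans hxy)]

lemma abs_upperFunDeriv_sub_le (hx : 1 / 2 ≤ x) (hxy : x ≤ y) :
    |upperFunDeriv x - upperFunDeriv y| ≤ 52 * exp (22 - 2 * x) * (y - x) := by
  have hlower := abs_lowerFun_sub_le (sub_le_sub_right hxy 1)
  have hnum : |lowerFun (x - 1) - upperFun x - (lowerFun (y - 1) - upperFun y)| ≤
      22 * exp (22 - 2 * x) * (y - x) :=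
    calc _ ≤ |lowerFun (x - 1) - lowerFun (y - 1)| + |upperFun x - upperFun y| := by
          rw [sub_sub_sub_comm]; exact abs_sub _ _
      _ ≤ 2 * (9 * exp (22 - 2 * x)) * (y - x) + 4 * exp (22 - 2 * x) * (y - x) := by
          refine add_le_add (hlower.trans ?_) (abs_upperFun_sub_le hx hxy)
          rw [sub_sub_sub_cancel_right]
          gcongr
          exact exp_sub_two_mul_sub_one_le 22 x
      _ = 22 * exp (22 - 2 * x) * (y - x) := by ring
  have := abs_div_sub_div_le hx hxy hnum ((abs_upperFunDeriv_le (hx.trans hxy)).trans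
    (mul_le_mul_of_nonneg_left (exp_sub_two_mul_le_of_le hxy 22) four_pos.le))
  calc _ ≤ _ := this
    _ = _ := by ring

lemma abs_lowerFunDeriv_sub_le (hx : 2 < x) (hxy : x ≤ y) :
    |lowerFunDeriv x - lowerFunDeriv y| ≤ 80 * exp (22 - 2 * x) * (y - x) := by
  have hupper := abs_upperFun_sub_le (by linarith : 1 / 2 ≤ x - 1) (sub_le_sub_right hxy 1)
  have hnum : |upperFun (x - 1) - lowerFun x - (upperFun (y - 1) - lowerFun y)| ≤
      38 * exp (22 - 2 * x) * (y - x) :=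
    calc _ ≤ |upperFun (x - 1) - upperFun (y - 1)| + |lowerFun x - lowerFun y| := by
          rw [sub_sub_sub_comm]; exact abs_sub _ _
      _ ≤ 4 * (9 * exp (22 - 2 * x)) * (y - x) + 2 * exp (22 - 2 * x) * (y - x) := by
          refine add_le_add (hupper.trans ?_) (abs_lowerFun_sub_le hxy)
          rw [sub_sub_sub_cancel_right]
          gcongr
          exact exp_sub_two_mul_sub_one_le 22 x
      _ = 38 * exp (22 - 2 * x) * (y - x) := by ring
  have hquot : |(upperFun (y - 1) - lowerFun y) / y| ≤ 2 * exp (22 - 2 * x) := by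
    rw [← lowerFunDeriv_of_two_lt (hx.trans_le hxy), abs_of_nonneg (lowerFunDeriv_nonneg y)]
    linarith [lowerFunDeriv_le y, exp_sub_two_mul_le_of_le hxy 22]
  rw [lowerFunDeriv_of_two_lt hx, lowerFunDeriv_of_two_lt (hx.trans_le hxy)]
  calc _ ≤ _ := abs_div_sub_div_le (by linarith) hxy hnum hquot
    _ = _ := by ring

lemma antitone_const_mul_exp_sub_two_mul {K : ℝ} (hK : 0 ≤ K) (c : ℝ) :
    Antitone fun t => K * exp (c - 2 * t) := fun _ _ h =>
  mul_le_mul_of_nonneg_left (exp_sub_two_mul_le_of_le h c) hK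

lemma upperFun_le_taylor (hx : 1 / 2 < x) (hy : 1 / 2 < y) :
    upperFun x ≤
      upperFun y + upperFunDeriv y * (x - y) + 52 * exp (22 - 2 * min x y) * (x - y) ^ 2 := by
  have := abs_sub_sub_mul_le_of_hasDerivAt (a := 1 / 2)
    (continuousOn_upperFun.mono fun t (ht : 1 / 2 ≤ t) => one_half_pos.trans_le ht)
    (fun t ht => hasDerivAt_upperFun (one_half_pos.trans ht))
    (antitone_const_mul_exp_sub_two_mul (K := 52) (by norm_num) 22) (fun t => by positivity)
    (fun s t hs hst => abs_upperFunDeriv_sub_le hs.le hst) hx.le hy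
  linarith [(abs_le.mp this).2]

lemma lowerFun_taylor_le_of_two_le (hx : 2 ≤ x) (hy : 2 < y) :
    lowerFun y + lowerFunDeriv y * (x - y) - 80 * exp (22 - 2 * min x y) * (x - y) ^ 2 ≤
      lowerFun x := by
  have := abs_sub_sub_mul_le_of_hasDerivAt (a := 2) continuous_lowerFun.continuousOn
    (fun t ht => hasDerivAt_lowerFun ht)
    (antitone_const_mul_exp_sub_two_mul (K := 80) (by norm_num) 22) (fun t => by positivity)
    (fun s t hs hst => abs_lowerFunDeriv_sub_le hs hst) hx hy
  linarith [(abs_le.mp this).1]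

lemma lowerFun_taylor_le (x y : ℝ) :
    lowerFun y + lowerFunDeriv y * (x - y) - 80 * exp (22 - 2 * min x y) * (x - y) ^ 2 ≤
      lowerFun x := by
  rcases le_or_gt y 2 with hy | hy
  · rw [lowerFunDeriv_of_le_two hy, lowerFun_of_le_two hy]
    have : 0 ≤ 80 * exp (22 - 2 * min x y) * (x - y) ^ 2 := by positivity
    linarith [lowerFun_nonneg x]
  rcases le_total 2 x with hx | hx
  · exact lowerFun_taylor_le_of_two_le hx hy
  -- To the left of the corner at `2` the claim is weaker than at the corner itself.
  have hcorner := lowerFun_taylor_le_of_two_le le_rfl hy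
  rw [min_eq_left hy.le, lowerFun_of_le_two le_rfl] at hcorner
  rw [min_eq_left (by linarith), lowerFun_of_le_two hx]
  have hlinear : lowerFunDeriv y * (x - y) ≤ lowerFunDeriv y * (2 - y) :=
    mul_le_mul_of_nonneg_left (by linarith) (lowerFunDeriv_nonneg y)
  have hquad : 80 * exp (22 - 2 * 2) * (2 - y) ^ 2 ≤ 80 * exp (22 - 2 * x) * (x - y) ^ 2 := by
    gcongr ?_ * ?_ * ?_
    · exact exp_sub_two_mul_le_of_le hx 22
    · nlinarith
  linarith

lemma exists_linear_decrease_upperFun {a b : ℝ} (ha : 0 < a) :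
    ∃ m, 0 < m ∧ ∀ r s, a ≤ r → r ≤ s → s ≤ b → upperFun s + m * (s - r) ≤ upperFun r := by
  have hcont : ContinuousOn (fun s => (upperFun s - lowerFun (s - 1)) / s) (Set.Icc a b) :=
    ((continuousOn_upperFun.mono fun s hs => ha.trans_le hs.1).sub
      continuous_lowerFun_sub_one.continuousOn).div continuousOn_id
      fun s hs => (ha.trans_le hs.1).ne'
  obtain ⟨m, hm, hle⟩ := isCompact_Icc.exists_forall_le' hcont (a := 0) fun s hs =>
    div_pos (sub_pos.mpr (lowerFun_lt_upperFun _ (ha.trans_le hs.1))) (ha.trans_le hs.1)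
  refine ⟨m, hm, fun r s hr hrs hs => ?_⟩
  have := sub_le_mul_sub_of_hasDerivAt_le (C := -m) hrs
    (continuousOn_upperFun.mono fun t ht => (ha.trans_le hr).trans_le ht.1)
    (fun t ht => hasDerivAt_upperFun ((ha.trans_le hr).trans ht.1)) fun t ht => by
      have := hle t ⟨hr.trans ht.1.le, ht.2.le.trans hs⟩
      rw [← neg_sub, neg_div] at this
      exact le_neg.mp this
  linarith

lemma exists_linear_increase_lowerFun (b : ℝ) :
    ∃ m, 0 < m ∧ ∀ r s, 2 ≤ r → r ≤ s → s ≤ b → lowerFun r + m * (s - r) ≤ lowerFun s := by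
  have hcont : ContinuousOn (fun s => (upperFun (s - 1) - lowerFun s) / s) (Set.Icc 2 b) :=
    ((continuousOn_upperFun_sub_one.mono fun s hs => hs.1).sub
      continuous_lowerFun.continuousOn).div continuousOn_id fun s hs =>
        (zero_lt_two.trans_le hs.1).ne'
  obtain ⟨m, hm, hle⟩ := isCompact_Icc.exists_forall_le' hcont (a := 0) fun s hs =>
    div_pos (sub_pos.mpr (lowerFun_lt_upperFun _ (by linarith [hs.1]))) (by linarith [hs.1])
  refine ⟨m, hm, fun r s hr hrs hs => ?_⟩
  have := mul_sub_le_sub_of_le_hasDerivAt hrs continuous_lowerFun.continuousOn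
    (fun t ht => hasDerivAt_lowerFun (hr.trans_lt ht.1)) fun t ht =>
      (hle t ⟨hr.trans ht.1.le, ht.2.le.trans hs⟩).trans_eq
        (lowerFunDeriv_of_two_lt (hr.trans_lt ht.1)).symm
  linarith

lemma exists_pos_between_lowerFun_upperFun :
    ∃ l, 0 < l ∧ (∀ s, lowerFun s ≤ l) ∧ ∀ s, 0 < s → l ≤ upperFun s := by
  have hbdd : BddAbove (Set.range lowerFun) :=
    ⟨upperFun 1, Set.forall_mem_range.mpr fun x => (lowerFun_lt_upperFun x one_pos).le⟩
  refine ⟨⨆ s, lowerFun s, ?_, le_ciSup hbdd, fun s hs =>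
    ciSup_le fun x => (lowerFun_lt_upperFun x hs).le⟩
  obtain ⟨m, hm, hincrease⟩ := exists_linear_increase_lowerFun 3
  have := hincrease 2 3 le_rfl (by norm_num) le_rfl
  rw [lowerFun_of_le_two le_rfl] at this
  exact (by linarith : 0 < lowerFun 3).trans_le (le_ciSup hbdd 3)

end Decay

/-- The properties of the pair (upper, lower) of sieve functions that drive the sieve induction.
The pair `(Φ, Ψ)` is `(F, -f)` for the upper bound and `(-f, F)` for the lower bound, and `-H s` is
the slope of `Ψ` at `s - 1`. The field `mul_add_mul_le` is the integrated delay equation, and `a` is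
the left end of the range of `s` on which it is used. -/
structure SieveMajorant (Φ Ψ H : ℝ → ℝ) (a K m : ℝ) : Prop where
  mul_add_mul_le : ∀ r s, a ≤ r → r ≤ s → s * Φ s + (s - r) * Ψ (s - 1) ≤ r * Φ r
  anti : ∀ r s, a ≤ r → r ≤ s → Φ s ≤ Φ r
  add_mul_sub_le : ∀ r s, a ≤ r → r ≤ s → s ≤ 16 → Φ s + m * (s - r) ≤ Φ r
  taylor : ∀ s δ, a ≤ s → |δ| ≤ 1 / 4 →
    Ψ (s - 1 + δ) ≤ Ψ (s - 1) - H s * δ + K * exp (-2 * s) * δ ^ 2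
  slope_nonneg : ∀ s, a ≤ s → 0 ≤ H s
  slope_le : ∀ s, a ≤ s → H s ≤ K * exp (-2 * s)
  slope_sub_le : ∀ r s, a ≤ r → r ≤ s → H r - H s ≤ K * exp (-2 * r) * (s - r)

lemma exp_sub_two_mul_min_le {s δ : ℝ} (hδ : |δ| ≤ 1 / 4) :
    exp (22 - 2 * min (s - 1 + δ) (s - 1)) ≤ 27 * exp (22 - 2 * s) := by
  have hmin : s - 5 / 4 ≤ min (s - 1 + δ) (s - 1) :=
    le_min (by linarith [(abs_le.mp hδ).1]) (by linarith)
  calc _ ≤ exp (3 + (22 - 2 * s)) := exp_le_exp.mpr (by linarith)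
    _ ≤ 27 * exp (22 - 2 * s) := by rw [exp_add]; gcongr; exact exp_three_le

lemma exp_sub_two_mul_eq (c s : ℝ) : exp (c - 2 * s) = exp c * exp (-2 * s) := by
  rw [← exp_add]
  ring_nf

lemma exists_sieveMajorant_upperFun :
    ∃ m, 0 < m ∧ SieveMajorant upperFun (fun s => -lowerFun s) (fun s => lowerFunDeriv (s - 1))
      (1 / 8) (2160 * exp 22) m := by
  obtain ⟨m, hm, hdecrease⟩ :=
    exists_linear_decrease_upperFun (by norm_num : (0 : ℝ) < 1 / 8) (b := 16)
  refine ⟨m, hm, ⟨fun r s hr hrs => ?_, fun r s hr hrs => ?_, hdecrease, fun s δ _ hδ => ?_,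
    fun s _ => lowerFunDeriv_nonneg _, fun s _ => ?_, fun r s _ hrs => ?_⟩⟩
  · rw [mul_upperFun (by linarith), mul_upperFun (by linarith)]
    linarith [upperNum_sub_le hrs]
  · exact antitoneOn_upperFun (show 0 < r by linarith) (show 0 < s by linarith) hrs
  · have htaylor := lowerFun_taylor_le (s - 1 + δ) (s - 1)
    rw [show s - 1 + δ - (s - 1) = δ by ring] at htaylor
    have := mul_le_mul_of_nonneg_right (exp_sub_two_mul_min_le (s := s) hδ) (sq_nonneg δ)
    rw [exp_sub_two_mul_eq 22 s] at this
    linarith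
  · have h₁ := lowerFunDeriv_le (s - 1)
    have h₂ := exp_sub_two_mul_sub_one_le 22 s
    rw [exp_sub_two_mul_eq 22 s] at h₂
    nlinarith [mul_pos (exp_pos 22) (exp_pos (-2 * s))]
  · rcases le_or_gt (r - 1) 2 with h | h
    · rw [lowerFunDeriv_of_le_two h]
      have := mul_nonneg (by positivity : 0 ≤ 2160 * exp 22 * exp (-2 * r)) (sub_nonneg.mpr hrs)
      linarith [lowerFunDeriv_nonneg (s - 1)]
    · have h₁ := (abs_le.mp (abs_lowerFunDeriv_sub_le h (sub_le_sub_right hrs 1))).2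
      have h₂ := mul_le_mul_of_nonneg_right (exp_sub_two_mul_sub_one_le 22 r) (sub_nonneg.mpr hrs)
      rw [exp_sub_two_mul_eq 22 r] at h₂
      have := mul_nonneg (by positivity : 0 ≤ exp 22 * exp (-2 * r)) (sub_nonneg.mpr hrs)
      linarith

lemma exists_sieveMajorant_lowerFun :
    ∃ m, 0 < m ∧ SieveMajorant (fun s => -lowerFun s) upperFun (fun s => -upperFunDeriv (s - 1))
      2 (2160 * exp 22) m := by
  obtain ⟨m, hm, hincrease⟩ := exists_linear_increase_lowerFun 16
  refine ⟨m, hm, ⟨fun r s hr hrs => ?_, fun r s _ hrs => neg_le_neg (monotone_lowerFun hrs),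
    fun r s hr hrs hs => ?_, fun s δ hs hδ => ?_, fun s hs => ?_, fun s hs => ?_,
    fun r s hr hrs => ?_⟩⟩
  · rw [mul_neg, mul_neg, mul_lowerFun (by linarith), mul_lowerFun (by linarith)]
    linarith [le_lowerNum_sub hr hrs]
  · linarith [hincrease r s hr hrs hs]
  · have htaylor := upperFun_le_taylor (x := s - 1 + δ) (y := s - 1)
      (by linarith [(abs_le.mp hδ).1]) (by linarith)
    rw [show s - 1 + δ - (s - 1) = δ by ring] at htaylor
    have h₁ := mul_le_mul_of_nonneg_right (exp_sub_two_mul_min_le (s := s) hδ) (sq_nonneg δ)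
    rw [exp_sub_two_mul_eq 22 s] at h₁
    have h₂ : 0 ≤ exp 22 * exp (-2 * s) * δ ^ 2 := by positivity
    linarith
  · exact neg_nonneg.mpr (upperFunDeriv_neg (by linarith)).le
  · have h₁ := (abs_le.mp (abs_upperFunDeriv_le (by linarith : 1 / 2 ≤ s - 1))).1
    have h₂ := exp_sub_two_mul_sub_one_le 22 s
    rw [exp_sub_two_mul_eq 22 s] at h₂
    nlinarith [mul_pos (exp_pos 22) (exp_pos (-2 * s))]
  · have h₁ := (abs_le.mp (abs_upperFunDeriv_sub_le (by linarith : 1 / 2 ≤ r - 1)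
      (sub_le_sub_right hrs 1))).1
    have h₂ := mul_le_mul_of_nonneg_right (exp_sub_two_mul_sub_one_le 22 r) (sub_nonneg.mpr hrs)
    rw [exp_sub_two_mul_eq 22 r] at h₂
    have := mul_nonneg (by positivity : 0 ≤ exp 22 * exp (-2 * r)) (sub_nonneg.mpr hrs)
    linarith

section ExponentialTerm

variable {q s t δ : ℝ}

lemma exp_neg_sub_one_add_le (s : ℝ) (hδ : |δ| ≤ 1 / 4) : exp (-(s - 1 + δ)) ≤ 4 * exp (-s) := by
  have hquarter : exp (1 / 4) ≤ 1 / (1 - 1 / 4) :=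
    exp_bound_div_one_sub_of_interval (by norm_num) (by norm_num)
  calc exp (-(s - 1 + δ)) ≤ exp (1 + 1 / 4 - s) :=
        exp_le_exp.mpr (by linarith [(abs_le.mp hδ).1])
    _ = exp 1 * exp (1 / 4) * exp (-s) := by rw [← exp_add, ← exp_add]; ring_nf
    _ ≤ 3 * (1 / (1 - 1 / 4)) * exp (-s) := by gcongr; exact exp_one_lt_three.le
    _ = 4 * exp (-s) := by norm_num

lemma exp_neg_le_exp_neg_div_one_add {x : ℝ} (hx : 0 ≤ x) (h : t + x ≤ s) :
    exp (-s) ≤ exp (-t) / (1 + x) := by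
  rw [le_div_iff₀ (by linarith)]
  calc exp (-s) * (1 + x) ≤ exp (-s) * exp x := by gcongr; linarith [add_one_le_exp x]
    _ = exp (x - s) := by rw [← exp_add]; ring_nf
    _ ≤ exp (-t) := exp_le_exp.mpr (by linarith)

lemma mul_exp_neg_le_exp_neg_sub (hq : 0 < q) (hq₁ : q ≤ 1 / 100) (hs : 0 ≤ s)
    (hts : t + s * q ≤ s) (hδ : |δ| ≤ 1 / 4) :
    (1 - 3 * q - (1 + 4 * q) / (1 + s * q)) * exp (-t) ≤
      (1 - q) ^ 3 * exp (-t) - exp (-s) - q * exp (-(s - 1 + δ)) := by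
  have hcube : 1 - 3 * q ≤ (1 - q) ^ 3 := by nlinarith [mul_nonneg (sq_nonneg q) hq.le]
  have h₁ : (1 - 3 * q) * exp (-t) ≤ (1 - q) ^ 3 * exp (-t) := by gcongr
  have h₂ : (1 + 4 * q) * exp (-s) ≤ (1 + 4 * q) * (exp (-t) / (1 + s * q)) := by
    gcongr
    exact exp_neg_le_exp_neg_div_one_add (by positivity) hts
  have h₃ : q * exp (-(s - 1 + δ)) ≤ q * (4 * exp (-s)) := by
    gcongr
    exact exp_neg_sub_one_add_le s hδ
  rw [sub_mul, div_mul_eq_mul_div, ← mul_div_assoc] at *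
  linarith

lemma mul_exp_neg_le_of_sixteen_le (hq : 0 < q) (hq₁ : q ≤ 1 / 100) (hs : 16 ≤ s)
    (hts : t + s * q ≤ s) (hδ : |δ| ≤ 1 / 4) :
    q * exp (-t) ≤ (1 - q) ^ 3 * exp (-t) - exp (-s) - q * exp (-(s - 1 + δ)) := by
  refine le_trans ?_ (mul_exp_neg_le_exp_neg_sub hq hq₁ (by linarith) hts hδ)
  gcongr
  have hsq : 16 * q ≤ s * q := by gcongr
  rw [le_sub_comm, div_le_iff₀ (by linarith)]
  nlinarith

lemma neg_seven_mul_le (hq : 0 < q) (hq₁ : q ≤ 1 / 100) (hs : 0 ≤ s) (ht : 0 ≤ t)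
    (hts : t + s * q ≤ s) (hδ : |δ| ≤ 1 / 4) :
    -7 * q ≤ (1 - q) ^ 3 * exp (-t) - exp (-s) - q * exp (-(s - 1 + δ)) := by
  refine le_trans ?_ (mul_exp_neg_le_exp_neg_sub hq hq₁ hs hts hδ)
  have hle : (1 + 4 * q) / (1 + s * q) ≤ 1 + 4 * q :=
    div_le_self (by linarith) (le_add_of_nonneg_right (by positivity))
  have hexp : exp (-t) ≤ 1 := exp_le_one_iff.mpr (by linarith)
  nlinarith [exp_pos (-t)]

lemma le_exp_of_le_two_mul (hs : s ≤ 2 * t) : s ≤ exp t :=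
  calc s ≤ 2 * exp (t - 1) := by linarith [add_one_le_exp (t - 1)]
    _ ≤ exp 1 * exp (t - 1) := by gcongr; linarith [add_one_le_exp 1]
    _ = exp t := by rw [← exp_add, add_sub_cancel]

end ExponentialTerm

namespace SieveMajorant

variable {Φ Ψ H : ℝ → ℝ} {d K m : ℝ}

lemma slope_sub_le_div (g : SieveMajorant Φ Ψ H d K m) (hd : 0 < d) (hK : 0 ≤ K) {r s : ℝ}
    (hr : d ≤ r) (hrs : r ≤ s) : H r - H s ≤ 3 * K * exp (-r) * ((s - r) / s) := by
  have hs₀ : 0 < s := by linarith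
  have hquot : 0 ≤ (s - r) / s := div_nonneg (by linarith) hs₀.le
  have hKexp : 0 ≤ K * exp (-r) := by positivity
  rcases le_total s (2 * (s - r)) with h | h
  · have hhalf : 1 / 2 ≤ (s - r) / s := by rw [le_div_iff₀ hs₀]; linarith
    have hdecay : K * exp (-2 * r) ≤ K * exp (-r) := by
      gcongr
      linarith
    nlinarith [g.slope_le r hr, g.slope_nonneg s (hr.trans hrs)]
  · have hexp : exp (-r) * s ≤ 1 := by
      rw [exp_neg, inv_mul_le_one₀ (exp_pos r)]
      exact le_exp_of_le_two_mul (by linarith)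
    calc H r - H s ≤ K * exp (-2 * r) * (s - r) := g.slope_sub_le r s hr hrs
      _ = K * exp (-r) * ((s - r) / s) * (exp (-r) * s) := by
          rw [show -2 * r = -r + -r by ring, exp_add]; field_simp
      _ ≤ K * exp (-r) * ((s - r) / s) * 1 := by gcongr
      _ ≤ 3 * K * exp (-r) * ((s - r) / s) := by nlinarith [mul_nonneg hKexp hquot]

lemma scaled_mul_add_mul_le (g : SieveMajorant Φ Ψ H d K m) {L v q : ℝ} (hL : 0 < L) (hv : 0 ≤ v)
    (hq : 0 ≤ q) (hd : d ≤ L * (v * (1 - q))) :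
    v * Φ (L * v) + v * q * Ψ (L * v - 1) ≤ v * (1 - q) * Φ (L * (v * (1 - q))) := by
  have hle : L * (v * (1 - q)) ≤ L * v := by gcongr; nlinarith
  refine le_of_mul_le_mul_left ?_ hL
  linear_combination g.mul_add_mul_le _ _ hd hle

end SieveMajorant

/-- The numerical data of one step of the sieve induction, from the primes below `p` to the primes
up to `p`. Up to a fixed constant, `v` is the density left by the primes below `p`, so that `1 / v`
approximates `log p`; the coefficients `β` and `β'` of the secondary term of the bounds before and
after the step are values of a bounded potential, whose increment matches the first-order effect of
the discrepancy `1 / v - log p`. -/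
structure SieveStep (C₀ C₁ B v p β β' : ℝ) : Prop where
  prime_ge : 100 ≤ p
  density_pos : 0 < v
  discrepancy_le : |1 / v - log p| ≤ C₀
  const_mul_density_le : C₀ * v ≤ 1 / 4
  potential_nonneg : 0 ≤ β'
  potential_le : β' ≤ B
  potential_sub_le : |β' - β - (1 / v - log p) / (v * p)| ≤ C₁ / p

/-- The main factor of the sieve bound with sieve function `Φ`, secondary term of slope `H` and
coefficient `β`, and exponential error with coefficient `M`, at density `v`. -/
noncomputable def sieveBound (Φ H : ℝ → ℝ) (M β v s : ℝ) : ℝ :=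
  v * Φ s - β * v ^ 3 * H s + M * v ^ 3 * exp (-s)

namespace SieveStep

variable {C₀ C₁ B v p β β' L M M' : ℝ} {Φ Ψ H : ℝ → ℝ} {d K m : ℝ}

lemma inv_prime_pos (h : SieveStep C₀ C₁ B v p β β') : 0 < 1 / p :=
  one_div_pos.mpr (by linarith [h.prime_ge])

lemma inv_prime_le (h : SieveStep C₀ C₁ B v p β β') : 1 / p ≤ 1 / 100 :=
  one_div_le_one_div_of_le (by norm_num) h.prime_ge

lemma next_density_pos (h : SieveStep C₀ C₁ B v p β β') : 0 < v * (1 - 1 / p) :=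
  mul_pos h.density_pos (by linarith [h.inv_prime_le])

lemma next_density_le (h : SieveStep C₀ C₁ B v p β β') : v * (1 - 1 / p) ≤ v :=
  mul_le_of_le_one_right h.density_pos.le (by linarith [h.inv_prime_pos])

lemma abs_discrepancy_mul_le (h : SieveStep C₀ C₁ B v p β β') :
    |(1 / v - log p) * v| ≤ C₀ * v := by
  rw [abs_mul, abs_of_pos h.density_pos]
  exact mul_le_mul_of_nonneg_right h.discrepancy_le h.density_pos.le

lemma sub_log_mul_eq (h : SieveStep C₀ C₁ B v p β β') (L : ℝ) :
    (L - log p) * v = L * v - 1 + (1 / v - log p) * v := by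
  have := h.density_pos.ne'
  field_simp
  ring

lemma dual_term_le (h : SieveStep C₀ C₁ B v p β β') (g : SieveMajorant Φ Ψ H d K m) (hd : 0 < d)
    (hK : 0 ≤ K) {s t : ℝ} (ht : d ≤ t) (hts : t ≤ s) :
    v * (1 / p) * Ψ (s - 1 + (1 / v - log p) * v) ≤
      v * (1 / p) * Ψ (s - 1) - v ^ 2 * (1 / p) * (1 / v - log p) * H s +
        v ^ 3 * (1 / p) * (K * exp (-t) * C₀ ^ 2) := by
  have hexp : exp (-2 * s) ≤ exp (-t) := exp_le_exp.mpr (by linarith)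
  have hsq : ((1 / v - log p) * v) ^ 2 ≤ (C₀ * v) ^ 2 :=
    sq_le_sq' (abs_le.mp h.abs_discrepancy_mul_le).1 (abs_le.mp h.abs_discrepancy_mul_le).2
  have htaylor := g.taylor s _ (ht.trans hts)
    (h.abs_discrepancy_mul_le.trans h.const_mul_density_le)
  have herror : K * exp (-2 * s) * ((1 / v - log p) * v) ^ 2 ≤ K * exp (-t) * (C₀ * v) ^ 2 := by
    gcongr
  have hvp : 0 ≤ v * (1 / p) := mul_nonneg h.density_pos.le h.inv_prime_pos.le
  linear_combination mul_le_mul_of_nonneg_left (htaylor.trans (add_le_add_right herror _)) hvp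

lemma slope_sub_le (h : SieveStep C₀ C₁ B v p β β') (g : SieveMajorant Φ Ψ H d K m)
    (hd : 1 / 8 ≤ d) (hK : 0 ≤ K) (hM' : 0 ≤ M')
    (ht : d ≤ (L - M' * v / p) * (v * (1 - 1 / p)))
    (hts : (L - M' * v / p) * (v * (1 - 1 / p)) ≤ L * v) :
    H ((L - M' * v / p) * (v * (1 - 1 / p))) - H (L * v) ≤
      3 * K * exp (-((L - M' * v / p) * (v * (1 - 1 / p)))) * (1 / p * (1 + 8 * M' * v ^ 2)) := by
  refine (g.slope_sub_le_div (by linarith) hK ht hts).trans ?_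
  have : 1 / 8 ≤ L * v := by linarith
  have hshift : 0 ≤ M' * v * (1 / p) * v :=
    mul_nonneg (mul_nonneg (mul_nonneg hM' h.density_pos.le) h.inv_prime_pos.le) h.density_pos.le
  gcongr
  rw [div_le_iff₀ (by linarith), div_eq_mul_one_div (M' * v) p]
  have h₁ : M' * v * (1 / p) * (v * (1 - 1 / p)) ≤ M' * v * (1 / p) * v := by
    rw [← mul_assoc]
    exact mul_le_of_le_one_right hshift (by linarith [h.inv_prime_pos])
  have h₂ : M' * v * (1 / p) * v ≤ M' * v * (1 / p) * v * (8 * (L * v)) :=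
    le_mul_of_one_le_right hshift (by linarith)
  linarith

lemma potential_term_le (h : SieveStep C₀ C₁ B v p β β') (g : SieveMajorant Φ Ψ H d K m)
    (hd : 1 / 8 ≤ d) (hK : 0 ≤ K) (hM' : 0 ≤ M')
    (ht : d ≤ (L - M' * v / p) * (v * (1 - 1 / p)))
    (hts : (L - M' * v / p) * (v * (1 - 1 / p)) ≤ L * v) :
    β' * (v * (1 - 1 / p)) ^ 3 * H ((L - M' * v / p) * (v * (1 - 1 / p))) ≤
      β * v ^ 3 * H (L * v) + v ^ 2 * (1 / p) * (1 / v - log p) * H (L * v) +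
        v ^ 3 * (1 / p) * (3 * K * exp (-((L - M' * v / p) * (v * (1 - 1 / p)))) *
          (C₁ + B * (1 + 8 * M' * v ^ 2))) := by
  have hslope := h.slope_sub_le g hd hK hM' ht hts
  set t := (L - M' * v / p) * (v * (1 - 1 / p))
  have hp := h.inv_prime_pos
  have hv := h.density_pos
  have hβ' := h.potential_nonneg
  have hH := g.slope_nonneg _ (ht.trans hts)
  have hcube : β' * (v * (1 - 1 / p)) ^ 3 * H t ≤ β' * v ^ 3 * H t := by
    have := g.slope_nonneg t ht
    have := h.next_density_pos.le
    gcongr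
    exact h.next_density_le
  have hvary : β' * (H t - H (L * v)) ≤
      B * (3 * K * exp (-t) * (1 / p * (1 + 8 * M' * v ^ 2))) :=
    (mul_le_mul_of_nonneg_left hslope hβ').trans
      (mul_le_mul_of_nonneg_right h.potential_le (by positivity))
  have hpotential : (β' - β) * H (L * v) ≤
      ((1 / v - log p) / (v * p) + C₁ / p) * H (L * v) :=
    mul_le_mul_of_nonneg_right (by linarith [(abs_le.mp h.potential_sub_le).2]) hH
  have hC₁ : 0 ≤ C₁ / p := (abs_nonneg _).trans h.potential_sub_le
  have hdecay : C₁ / p * H (L * v) ≤ C₁ / p * (3 * K * exp (-t)) := by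
    refine mul_le_mul_of_nonneg_left ((g.slope_le _ (ht.trans hts)).trans ?_) hC₁
    gcongr
    · linarith
    · linarith
  calc _ ≤ v ^ 3 * (β' * H t) := by linarith
    _ ≤ v ^ 3 * (β * H (L * v) + (1 / v - log p) / (v * p) * H (L * v) +
          C₁ / p * (3 * K * exp (-t)) +
          B * (3 * K * exp (-t) * (1 / p * (1 + 8 * M' * v ^ 2)))) := by
        gcongr
        linarith
    _ = _ := by field_simp; ring

lemma exp_error_le_shift_gain (h : SieveStep C₀ C₁ B v p β β') (g : SieveMajorant Φ Ψ H d K m)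
    (hd : 0 ≤ d) (hM : 0 ≤ M) (hM' : 0 ≤ M') (hm : 32 * M ≤ m * M') (hL : 0 ≤ L)
    (ht : d ≤ (L - M' * v / p) * (v * (1 - 1 / p))) :
    M * v ^ 3 * (1 / p) * exp (-((L - M' * v / p) * (v * (1 - 1 / p)))) ≤
      v * (1 - 1 / p) *
          (Φ ((L - M' * v / p) * (v * (1 - 1 / p))) - Φ (L * (v * (1 - 1 / p)))) +
        M * v ^ 3 * ((1 - 1 / p) ^ 3 * exp (-((L - M' * v / p) * (v * (1 - 1 / p)))) -
          exp (-(L * v)) - 1 / p * exp (-(L * v - 1 + (1 / v - log p) * v))) := by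
  have hq := h.inv_prime_pos
  have hq₁ := h.inv_prime_le
  have hv := h.density_pos
  have hw := h.next_density_pos
  have hδ := h.abs_discrepancy_mul_le.trans h.const_mul_density_le
  have hMv : 0 ≤ M * v ^ 3 := by positivity
  rw [div_eq_mul_one_div (M' * v) p] at *
  set q := 1 / p
  have hgain : 0 ≤ M' * v * q * (v * (1 - q)) := by positivity
  have htr : (L - M' * v * q) * (v * (1 - q)) ≤ L * (v * (1 - q)) := by linarith
  have hrs : L * (v * (1 - q)) ≤ L * v := mul_le_mul_of_nonneg_left h.next_density_le hL
  have hts : (L - M' * v * q) * (v * (1 - q)) + L * v * q ≤ L * v := by linarith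
  rcases le_total 16 (L * v) with h16 | h16
  · have hexp := mul_exp_neg_le_of_sixteen_le hq hq₁ h16 hts hδ
    have hanti := mul_nonneg hw.le (sub_nonneg.mpr (g.anti _ _ ht htr))
    linarith [mul_le_mul_of_nonneg_left hexp hMv]
  · have hexp := neg_seven_mul_le hq hq₁ (hd.trans (ht.trans (htr.trans hrs)))
      (hd.trans ht) hts hδ
    have hstrict := mul_le_mul_of_nonneg_left (g.add_mul_sub_le _ _ ht htr (hrs.trans h16)) hw.le
    have hsq : 1 / 4 ≤ (1 - q) ^ 2 := by nlinarith
    have hshift : 8 * (M * v ^ 3 * q) ≤ m * M' * (v ^ 3 * q) * (1 - q) ^ 2 := by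
      calc 8 * (M * v ^ 3 * q) = 32 * M * (v ^ 3 * q) * (1 / 4) := by ring
        _ ≤ _ := mul_le_mul (by gcongr) hsq (by norm_num) (mul_nonneg (by linarith) (by positivity))
    have hone : M * v ^ 3 * q * exp (-((L - M' * v * q) * (v * (1 - q)))) ≤ M * v ^ 3 * q :=
      mul_le_of_le_one_right (by positivity) (exp_le_one_iff.mpr (by linarith))
    linarith [mul_le_mul_of_nonneg_left hexp hMv]

theorem sieveBound_add_le (h : SieveStep C₀ C₁ B v p β β') (g : SieveMajorant Φ Ψ H d K m)
    (hd : 1 / 8 ≤ d) (hK : 0 ≤ K) (hM' : 0 ≤ M') (hm : 32 * M ≤ m * M')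
    (hM : 3 * K * (C₀ ^ 2 + C₁ + B * (1 + 8 * M' * v ^ 2)) ≤ M) (hM₀ : 0 ≤ M) (hL : 0 < L)
    (ht : d ≤ (L - M' * v / p) * (v * (1 - 1 / p))) :
    sieveBound Φ H M β v (L * v) +
        (v * Ψ ((L - log p) * v) + M * v ^ 3 * exp (-((L - log p) * v))) / p ≤
      sieveBound Φ H M β' (v * (1 - 1 / p)) ((L - M' * v / p) * (v * (1 - 1 / p))) := by
  have hv := h.density_pos
  have hp := h.inv_prime_pos
  have htr : (L - M' * v / p) * (v * (1 - 1 / p)) ≤ L * (v * (1 - 1 / p)) := by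
    refine mul_le_mul_of_nonneg_right (sub_le_self L ?_) h.next_density_pos.le
    rw [div_eq_mul_one_div]
    positivity
  have hts := htr.trans (mul_le_mul_of_nonneg_left h.next_density_le hL.le)
  have hmain := g.scaled_mul_add_mul_le hL hv.le hp.le (ht.trans htr)
  have hdual := h.dual_term_le g (by linarith) hK ht hts
  have hpotential := h.potential_term_le g hd hK hM' ht hts
  have hshift := h.exp_error_le_shift_gain g (by linarith) hM₀ hM' hm hL.le ht
  rw [h.sub_log_mul_eq, sieveBound, sieveBound]
  set t := (L - M' * v / p) * (v * (1 - 1 / p))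
  have hC₀ : v ^ 3 * (1 / p) * (K * exp (-t) * C₀ ^ 2) ≤
      v ^ 3 * (1 / p) * (3 * K * exp (-t) * C₀ ^ 2) := by
    gcongr
    linarith
  have herror := mul_le_mul_of_nonneg_left hM (by positivity : 0 ≤ v ^ 3 * (1 / p) * exp (-t))
  linear_combination hmain + hdual + hpotential + hshift + hC₀ + herror

end SieveStep

section SelbergBound

open Finset
open ArithmeticFunction hiding log

/-- The weights `w` satisfy Mertens' first theorem together with a second-order formula in the
style of Selberg, both with error at most `R`. Since the partial sums of `w` are unbounded, only
one shift `c` can occur in the second-order formula. -/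
def SelbergBound (w : ℕ → ℝ) (c R : ℝ) : Prop :=
  ∀ N : ℕ, 1 ≤ N → |∑ n ∈ Ioc 0 N, w n + c - log N| ≤ R ∧
    |∑ n ∈ Ioc 0 N, w n * log n - (∑ n ∈ Ioc 0 N, w n + c) ^ 2 / 2| ≤ R

lemma log_add_one_sub_log_le {x : ℝ} (hx : 0 < x) : log (x + 1) - log x ≤ 1 / x := by
  rw [← log_div (by positivity) hx.ne']
  refine (log_le_sub_one_of_pos (by positivity)).trans_eq ?_
  field_simp
  ring

lemma one_div_add_one_le_log_sub_log {x : ℝ} (hx : 0 < x) :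
    1 / (x + 1) ≤ log (x + 1) - log x := by
  rw [← log_div (by positivity) hx.ne']
  refine Eq.trans_le ?_ (one_sub_inv_le_log_of_pos (by positivity))
  field_simp
  ring

lemma div_sub_one_lt_natCast_div (N d : ℕ) : (N : ℝ) / d - 1 < ((N / d : ℕ) : ℝ) := by
  rw [← Nat.floor_div_eq_div (K := ℝ)]
  exact Nat.sub_one_lt_floor _

lemma sum_vonMangoldt_le (N : ℕ) : ∑ d ∈ Ioc 0 N, Λ d ≤ (log 4 + 4) * N := by
  simpa [Chebyshev.psi] using Chebyshev.psi_le_const_mul_self (x := (N : ℝ)) (by positivity)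

lemma sum_log_eq_log_factorial (N : ℕ) : ∑ n ∈ Ioc 0 N, log n = log N.factorial := by
  rw [← prod_Ico_id_eq_factorial, Nat.cast_prod, log_prod, ← Ico_add_one_add_one_eq_Ioc, zero_add]
  exact fun n hn => Nat.cast_ne_zero.mpr (by rw [mem_Ico] at hn; lia)

lemma mul_log_sub_le_sum_log {N : ℕ} (hN : 1 ≤ N) : N * log N - N ≤ ∑ n ∈ Ioc 0 N, log n := by
  rw [sum_log_eq_log_factorial]
  have htwo_pi : 0 ≤ log (2 * π) := log_nonneg (by linarith [pi_gt_three])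
  linarith [Stirling.le_log_factorial_stirling (n := N) (by lia), log_natCast_nonneg N]

lemma sum_log_le_mul_log (N : ℕ) : ∑ n ∈ Ioc 0 N, log n ≤ N * log N := by
  refine (sum_le_card_nsmul _ _ (log N) fun n hn => ?_).trans_eq (by simp)
  rw [mem_Ioc] at hn
  exact log_le_log (by exact_mod_cast hn.1) (by exact_mod_cast hn.2)

lemma sum_log_eq_sum_vonMangoldt_mul (N : ℕ) :
    ∑ n ∈ Ioc 0 N, log n = ∑ d ∈ Ioc 0 N, Λ d * ((N / d : ℕ) : ℝ) := by
  rw [← sum_Ioc_mul_zeta_eq_sum, vonMangoldt_mul_zeta]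
  rfl

theorem abs_sum_vonMangoldt_div_sub_log_le {N : ℕ} (hN : 1 ≤ N) :
    |∑ d ∈ Ioc 0 N, Λ d / d - log N| ≤ log 4 + 4 := by
  have hN₀ : (0 : ℝ) < N := by exact_mod_cast hN
  have hlower : ∑ n ∈ Ioc 0 N, log n ≤ N * ∑ d ∈ Ioc 0 N, Λ d / d := by
    rw [sum_log_eq_sum_vonMangoldt_mul, mul_sum]
    refine sum_le_sum fun d _ => ?_
    rw [mul_div_left_comm]
    exact mul_le_mul_of_nonneg_left Nat.cast_div_le vonMangoldt_nonneg
  have hupper : N * ∑ d ∈ Ioc 0 N, Λ d / d - ∑ d ∈ Ioc 0 N, Λ d ≤ ∑ n ∈ Ioc 0 N, log n := by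
    rw [sum_log_eq_sum_vonMangoldt_mul, mul_sum, ← sum_sub_distrib]
    refine sum_le_sum fun d _ => ?_
    rw [mul_div_left_comm, ← mul_sub_one]
    exact mul_le_mul_of_nonneg_left (div_sub_one_lt_natCast_div N d).le vonMangoldt_nonneg
  have hlog_four : 0 ≤ log 4 := log_nonneg (by norm_num)
  rw [abs_le]
  constructor <;> refine le_of_mul_le_mul_left ?_ hN₀
  · linarith [mul_log_sub_le_sum_log hN, mul_nonneg hN₀.le hlog_four]
  · linarith [sum_log_le_mul_log N, sum_vonMangoldt_le N]

lemma sum_log_div_eq_sum_vonMangoldt_div_mul (N : ℕ) :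
    ∑ n ∈ Ioc 0 N, log n / n = ∑ d ∈ Ioc 0 N, Λ d / d * (harmonic (N / d) : ℝ) := by
  have hharmonic (n : ℕ) : (harmonic n : ℝ) = ∑ m ∈ Ioc 0 n, 1 / (m : ℝ) := by
    simp [harmonic_eq_sum_Icc, ← Icc_add_one_left_eq_Ioc]
  let f : ArithmeticFunction ℝ := ⟨fun n => Λ n / n, by simp⟩
  let g : ArithmeticFunction ℝ := ⟨fun n => 1 / (n : ℝ), by simp⟩
  simp only [hharmonic]
  refine (sum_congr rfl fun n _ => ?_).trans (sum_Ioc_mul_eq_sum_sum f g N)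
  rw [mul_apply, ← vonMangoldt_sum (n := n), ← Nat.sum_divisorsAntidiagonal (fun d _ => Λ d),
    sum_div]
  refine sum_congr rfl fun x hx => ?_
  rw [← (Nat.mem_divisorsAntidiagonal.mp hx).1, Nat.cast_mul]
  exact (by rw [div_mul_div_comm, mul_one] :
    Λ x.1 / ((x.1 : ℝ) * x.2) = Λ x.1 / x.1 * (1 / (x.2 : ℝ)))

lemma abs_harmonic_sub_log_le {n : ℕ} {x : ℝ} (hn : 1 ≤ n) (hnx : n ≤ x) (hxn : x ≤ n + 1) :
    |(harmonic n : ℝ) - (log x + eulerMascheroniConstant)| ≤ 1 / n := by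
  have hn₀ : (0 : ℝ) < n := by exact_mod_cast hn
  have hγ_gt := eulerMascheroniSeq_lt_eulerMascheroniConstant n
  have hγ_lt := eulerMascheroniConstant_lt_eulerMascheroniSeq' n
  rw [eulerMascheroniSeq] at hγ_gt
  rw [eulerMascheroniSeq', if_neg (by lia)] at hγ_lt
  have hlog_le := log_le_log (hn₀.trans_le hnx) hxn
  have hle_log := log_le_log hn₀ hnx
  have hgap := log_add_one_sub_log_le hn₀
  rw [abs_le]
  constructor <;> linarith

lemma abs_harmonic_div_sub_le {N d : ℕ} (hd : 1 ≤ d) (hdN : d ≤ N) :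
    |(harmonic (N / d) : ℝ) - (log N - log d + eulerMascheroniConstant)| ≤ 2 * d / N := by
  have hd₀ : (0 : ℝ) < d := by exact_mod_cast hd
  have hN₀ : (0 : ℝ) < N := by exact_mod_cast hd.trans hdN
  have hquot : 1 ≤ N / d := (Nat.one_le_div_iff hd).mpr hdN
  have hlt := div_sub_one_lt_natCast_div N d
  rw [← log_div hN₀.ne' hd₀.ne']
  refine (abs_harmonic_sub_log_le hquot Nat.cast_div_le (by linarith)).trans ?_
  have hone_le : (1 : ℝ) ≤ ((N / d : ℕ) : ℝ) := by exact_mod_cast hquot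
  rw [div_le_div_iff₀ (by linarith) hN₀]
  have hN_lt : (N : ℝ) < (((N / d : ℕ) : ℝ) + 1) * d := (div_lt_iff₀ hd₀).mp (by linarith)
  nlinarith

lemma abs_log_div_sub_half_sq_sub_sq_le {N : ℕ} (hN : 1 ≤ N) :
    |log ((N + 1 : ℕ) : ℝ) / (N + 1 : ℕ) - (log ((N + 1 : ℕ) : ℝ) ^ 2 / 2 - log N ^ 2 / 2)| ≤
      20 * ((N + 1 : ℕ) : ℝ) ^ (-(3 / 2) : ℝ) := by
  have hN₀ : (1 : ℝ) ≤ N := by exact_mod_cast hN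
  have hδ_le := log_add_one_sub_log_le (x := N) (by linarith)
  have hle_δ := one_div_add_one_le_log_sub_log (x := N) (by linarith)
  rw [← Nat.cast_add_one] at hδ_le hle_δ
  have hn : ((N + 1 : ℕ) : ℝ) = N + 1 := Nat.cast_add_one N
  generalize ((N + 1 : ℕ) : ℝ) = n at *
  set δ := log n - log N with hδ
  have hlog : 0 ≤ log n := log_nonneg (by linarith)
  have hlog_le : log n ≤ 2 * n ^ (1 / 2 : ℝ) := by
    linarith [log_le_rpow_div (x := n) (by linarith) (ε := 1 / 2) (by norm_num)]
  have hinv_le : 1 / (N : ℝ) ≤ 2 / n := by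
    rw [div_le_div_iff₀ (by linarith) (by linarith)]; linarith
  have hdiff : δ - 1 / n ≤ 2 / n ^ 2 := by
    calc δ - 1 / n ≤ 1 / N - 1 / n := by linarith
      _ = 1 / N * (1 / n) := by rw [hn]; field_simp; ring
      _ ≤ 2 / n * (1 / n) := mul_le_mul_of_nonneg_right hinv_le (one_div_nonneg.mpr (by linarith))
      _ = 2 / n ^ 2 := by ring
  have hpow : 1 / n ^ 2 * n ^ (1 / 2 : ℝ) = n ^ (-(3 / 2) : ℝ) := by
    rw [one_div, ← rpow_natCast, ← rpow_neg (by linarith), ← rpow_add (by linarith)]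
    norm_num
  have hpow_le : 1 / n ^ 2 ≤ n ^ (-(3 / 2) : ℝ) := by
    rw [← hpow]
    exact le_mul_of_one_le_right (by positivity) (one_le_rpow (by linarith) (by norm_num))
  have hcross : (δ - 1 / n) * log n ≤ 4 * n ^ (-(3 / 2) : ℝ) := by
    calc (δ - 1 / n) * log n ≤ 2 / n ^ 2 * (2 * n ^ (1 / 2 : ℝ)) :=
          mul_le_mul hdiff hlog_le hlog (by positivity)
      _ = 4 * n ^ (-(3 / 2) : ℝ) := by rw [← hpow]; ring
  have hcross_nonneg : 0 ≤ (δ - 1 / n) * log n := mul_nonneg (by linarith) hlog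
  have hsq : δ ^ 2 ≤ 4 * (1 / n ^ 2) := by
    calc δ ^ 2 ≤ (2 / n) ^ 2 :=
          pow_le_pow_left₀ ((one_div_nonneg.mpr (by linarith)).trans hle_δ) (hδ_le.trans hinv_le) 2
      _ = 4 * (1 / n ^ 2) := by ring
  have hexpand : log n / n - (log n ^ 2 / 2 - log N ^ 2 / 2) =
      δ ^ 2 / 2 - (δ - 1 / n) * log n := by
    rw [hδ]; ring
  rw [hexpand, abs_le]
  constructor <;> linarith [sq_nonneg δ]

lemma exists_abs_sum_log_div_sub_le :
    ∃ R : ℝ, ∀ N : ℕ, 1 ≤ N → |∑ n ∈ Ioc 0 N, log n / n - log N ^ 2 / 2| ≤ R := by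
  have hsummable : Summable fun n : ℕ => 20 * (n : ℝ) ^ (-(3 / 2) : ℝ) :=
    (summable_nat_rpow.mpr (by norm_num)).mul_left 20
  refine ⟨∑' n : ℕ, 20 * (n : ℝ) ^ (-(3 / 2) : ℝ), fun N hN => le_trans ?_
    (hsummable.sum_le_tsum (Ioc 0 N) fun n _ => by positivity)⟩
  induction N, hN using Nat.le_induction with
  | base => simp
  | succ N hN ih =>
    rw [sum_Ioc_succ_top N.zero_le, sum_Ioc_succ_top N.zero_le]
    refine le_trans (le_of_eq ?_) ((abs_add_le _ _).trans
      (add_le_add ih (abs_log_div_sub_half_sq_sub_sq_le hN)))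
    congr 1
    ring

lemma abs_sum_log_div_sub_vonMangoldt_le {N : ℕ} (hN : 1 ≤ N) :
    |∑ n ∈ Ioc 0 N, log n / n - (∑ d ∈ Ioc 0 N, Λ d / d * (log N + eulerMascheroniConstant) -
      ∑ d ∈ Ioc 0 N, Λ d / d * log d)| ≤ 2 * (log 4 + 4) := by
  have : (0 : ℝ) < N := by exact_mod_cast hN
  rw [sum_log_div_eq_sum_vonMangoldt_div_mul, ← sum_sub_distrib, ← sum_sub_distrib]
  calc _ ≤ ∑ d ∈ Ioc 0 N, 2 / N * Λ d := by
        refine (abs_sum_le_sum_abs _ _).trans (sum_le_sum fun d hd => ?_)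
        rw [mem_Ioc] at hd
        have hd₀ : (0 : ℝ) < d := by exact_mod_cast hd.1
        have hweight : 0 ≤ Λ d / d := div_nonneg vonMangoldt_nonneg hd₀.le
        rw [← mul_sub, ← mul_sub, abs_mul, abs_of_nonneg hweight]
        calc Λ d / d * |(harmonic (N / d) : ℝ) - (log N + eulerMascheroniConstant - log d)|
            ≤ Λ d / d * (2 * d / N) := by
              rw [add_sub_right_comm]
              gcongr
              exact abs_harmonic_div_sub_le hd.1 hd.2
          _ = 2 / N * Λ d := by field_simp
    _ ≤ 2 / N * ((log 4 + 4) * N) := by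
        rw [← mul_sum]; gcongr; exact sum_vonMangoldt_le N
    _ = 2 * (log 4 + 4) := by field_simp

theorem exists_selbergBound_vonMangoldt :
    ∃ R, SelbergBound (fun n => Λ n / n) eulerMascheroniConstant R := by
  obtain ⟨R, hR⟩ := exists_abs_sum_log_div_sub_le
  have hγ_pos := one_half_lt_eulerMascheroniConstant
  have hγ_lt := eulerMascheroniConstant_lt_two_thirds
  have hlog_four : 0 ≤ log 4 := log_nonneg (by norm_num)
  have hR₀ : 0 ≤ R := (abs_nonneg _).trans (hR 1 le_rfl)
  refine ⟨R + 2 * (log 4 + 4) + (log 4 + 4) ^ 2 + 1, fun N hN => ?_⟩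
  have hlogDiv := abs_le.mp (hR N hN)
  have hmertens := abs_sum_vonMangoldt_div_sub_log_le hN
  have hconv := abs_le.mp (abs_sum_log_div_sub_vonMangoldt_le hN)
  rw [← sum_mul] at hconv
  set A := ∑ d ∈ Ioc 0 N, Λ d / d
  have hsq : (A - log N) ^ 2 ≤ (log 4 + 4) ^ 2 := sq_le_sq.mpr (hmertens.trans (le_abs_self _))
  have hγ_sq : eulerMascheroniConstant ^ 2 ≤ 1 := by nlinarith
  refine ⟨abs_le.mpr ?_, abs_le.mpr ?_⟩
  · have hmertens := abs_le.mp hmertens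
    constructor <;> nlinarith [sq_nonneg (log 4 + 4)]
  · constructor <;> nlinarith [sq_nonneg (A - log N), sq_nonneg eulerMascheroniConstant]

end SelbergBound

section PrimeWeights

open Finset
open ArithmeticFunction hiding log

lemma log_mul_log_le (n : ℕ) : log n * log n ≤ 64 * (n : ℝ) ^ (1 / 4 : ℝ) := by
  have hlog : log n ≤ 8 * (n : ℝ) ^ (1 / 8 : ℝ) := by
    linarith [log_le_rpow_div (x := (n : ℝ)) (by positivity) (ε := 1 / 8) (by norm_num)]
  calc log n * log n ≤ (8 * (n : ℝ) ^ (1 / 8 : ℝ)) * (8 * (n : ℝ) ^ (1 / 8 : ℝ)) :=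
        mul_le_mul hlog hlog (log_natCast_nonneg n) (by positivity)
    _ = 64 * ((n : ℝ) ^ (1 / 8 : ℝ) * (n : ℝ) ^ (1 / 8 : ℝ)) := by ring
    _ = 64 * (n : ℝ) ^ (1 / 4 : ℝ) := by
        rw [← rpow_add_of_nonneg (by positivity) (by norm_num) (by norm_num)]; norm_num

lemma pow_add_two_rpow_le {b : ℝ} (hb : 2 ≤ b) (k : ℕ) :
    (b ^ (k + 2)) ^ (-(3 / 4) : ℝ) ≤ b ^ (-(3 / 2) : ℝ) * ((2 : ℝ) ^ (-(3 / 4) : ℝ)) ^ k := by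
  have hsq : (b ^ 2) ^ (-(3 / 4) : ℝ) = b ^ (-(3 / 2) : ℝ) := by
    rw [← rpow_natCast, ← rpow_mul (by linarith)]; norm_num
  rw [pow_add, mul_rpow (by positivity) (by positivity), hsq, mul_comm,
    ← rpow_pow_comm (by linarith)]
  gcongr _ * ?_ ^ k
  exact rpow_le_rpow_of_nonpos (by norm_num) hb (by norm_num)

lemma summable_indicator_primePow_not_prime :
    Summable ({n : ℕ | IsPrimePow n ∧ ¬ n.Prime}.indicator fun n => (n : ℝ) ^ (-(3 / 4) : ℝ)) := by
  rw [← summable_subtype_iff_indicator]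
  have hpair : Summable fun x : ℕ × ℕ =>
      (x.1 : ℝ) ^ (-(3 / 2) : ℝ) * ((2 : ℝ) ^ (-(3 / 4) : ℝ)) ^ x.2 :=
    Summable.mul_of_nonneg (summable_nat_rpow.mpr (by norm_num))
      (summable_geometric_of_lt_one (by positivity)
        (rpow_lt_one_of_one_lt_of_neg (by norm_num) (by norm_num)))
      (fun n => by positivity) (fun k => by positivity)
  have hroot (n : {n : ℕ | IsPrimePow n ∧ ¬ n.Prime}) :
      ∃ x : ℕ × ℕ, 2 ≤ x.1 ∧ (n : ℕ) = x.1 ^ (x.2 + 2) := by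
    obtain ⟨n, ⟨p, k, hp, hk, rfl⟩, hn⟩ := n
    have hk₁ : k ≠ 1 := by
      rintro rfl
      exact hn (by simpa only [pow_one] using hp.nat_prime)
    exact ⟨(p, k - 2), hp.nat_prime.two_le, by rw [Nat.sub_add_cancel (by lia)]⟩
  choose root two_le_root eq_root using hroot
  have hinj : Function.Injective root := fun a b hab =>
    Subtype.ext (by rw [eq_root a, eq_root b, hab])
  refine (hpair.comp_injective hinj).of_nonneg_of_le
    (fun n => rpow_nonneg (Nat.cast_nonneg _) _) fun n => ?_
  simp only [Function.comp_apply]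
  rw [eq_root n, Nat.cast_pow]
  exact pow_add_two_rpow_le (by exact_mod_cast two_le_root n) _

lemma abs_tsum_sub_sum_mul_log_le {e : ℕ → ℝ} {N : ℕ} (hN : 1 ≤ N) (he₀ : e 0 = 0)
    (he : Summable fun n => |e n|) (helog : Summable fun n => |e n| * log n) :
    |∑' n, e n - ∑ n ∈ Ioc 0 N, e n| * log N ≤ ∑' n, |e n| * log n := by
  have hterm (n : ℕ) : 0 ≤ |e n| * log n := mul_nonneg (abs_nonneg _) (log_natCast_nonneg n)
  set U : Set ℕ := ((Ioc 0 N : Finset ℕ) : Set ℕ)ᶜ with hU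
  have htail : ∑' n, e n - ∑ n ∈ Ioc 0 N, e n = ∑' n : U, e n :=
    sub_eq_of_eq_add' (he.of_abs.sum_add_tsum_compl (s := Ioc 0 N)).symm
  have hlog (n : U) : |e n| * log N ≤ |e n| * log (n : ℕ) := by
    obtain ⟨n, hn⟩ := n
    rcases Nat.eq_zero_or_pos n with rfl | hn₀
    · simp [he₀]
    · have hNn : N < n := by simpa [hU, hn₀] using hn
      dsimp only
      gcongr
  calc |∑' n, e n - ∑ n ∈ Ioc 0 N, e n| * log N ≤ (∑' n : U, |e n|) * log N := by
        rw [htail]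
        gcongr
        exact norm_tsum_le_tsum_norm (f := fun n : U => e n) (he.subtype U)
    _ = ∑' n : U, |e n| * log N := tsum_mul_right.symm
    _ ≤ ∑' n : U, |e n| * log (n : ℕ) :=
        ((he.subtype U).mul_right _).tsum_le_tsum hlog (helog.subtype U)
    _ ≤ ∑' n, |e n| * log n := helog.tsum_subtype_le _ _ hterm

theorem SelbergBound.exists_sub {w e : ℕ → ℝ} {c R : ℝ} (h : SelbergBound w c R) (he₀ : e 0 = 0)
    (he : Summable fun n => |e n|) (helog : Summable fun n => |e n| * log n) :
    ∃ R', SelbergBound (fun n => w n - e n) (c + ∑' n, e n) R' := by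
  set E₀ := ∑' n, |e n|
  set E₁ := ∑' n, |e n| * log n
  have hE₀ : 0 ≤ E₀ := tsum_nonneg fun n => abs_nonneg _
  have hE₁ : 0 ≤ E₁ := tsum_nonneg fun n => mul_nonneg (abs_nonneg _) (log_natCast_nonneg n)
  have hR : 0 ≤ R := (abs_nonneg _).trans (h 1 le_rfl).1
  refine ⟨R + 2 * E₀ + 2 * E₁ + 2 * E₀ * R + 2 * E₀ ^ 2, fun N hN => ?_⟩
  obtain ⟨hfirst, hsecond⟩ := h N hN
  have htail := abs_tsum_sub_sum_mul_log_le hN he₀ he helog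
  have htotal : |∑' n, e n| ≤ E₀ := norm_tsum_le_tsum_norm (f := e) he
  have hpartial : |∑ n ∈ Ioc 0 N, e n| ≤ E₀ :=
    (abs_sum_le_sum_abs _ _).trans (he.sum_le_tsum _ fun _ _ => abs_nonneg _)
  have hpartial_log : |∑ n ∈ Ioc 0 N, e n * log n| ≤ E₁ := by
    refine (abs_sum_le_sum_abs _ _).trans ?_
    simp only [abs_mul, abs_of_nonneg (log_natCast_nonneg _)]
    exact helog.sum_le_tsum _ fun n _ => mul_nonneg (abs_nonneg _) (log_natCast_nonneg n)
  simp only [sub_mul, sum_sub_distrib]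
  set A := ∑ n ∈ Ioc 0 N, w n
  set Q := ∑ n ∈ Ioc 0 N, w n * log n
  set s := ∑ n ∈ Ioc 0 N, e n
  set s₁ := ∑ n ∈ Ioc 0 N, e n * log n
  set τ := ∑' n, e n - s with hτ
  have hτ_le : |τ| ≤ 2 * E₀ := (abs_sub _ _).trans (by linarith)
  have hA : A - s + (c + ∑' n, e n) = A + c + τ := by rw [hτ]; ring
  rw [hA]
  have hlog_term : |τ * log N| ≤ E₁ := by
    rwa [abs_mul, abs_of_nonneg (log_natCast_nonneg N)]
  have hcross : |τ * (A + c - log N)| ≤ 2 * E₀ * R := by rw [abs_mul]; gcongr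
  have hsq : |τ * τ| ≤ 2 * E₀ * (2 * E₀) := by rw [abs_mul]; gcongr
  have hE₀R : 0 ≤ E₀ * R := mul_nonneg hE₀ hR
  have hE₀_sq := sq_nonneg E₀
  rw [abs_le] at hfirst hsecond hpartial_log hτ_le hlog_term hcross hsq
  constructor <;> rw [abs_le] <;> constructor <;> linarith

/-- The weight `log p / (p - 1)` of a prime `p`, extended by zero: the total mass that the weights
`log p / p ^ k` give to the powers of `p`. -/
noncomputable def primeWeight (n : ℕ) : ℝ := if n.Prime then log n / (n - 1) else 0

lemma vonMangoldt_div_sub_primeWeight_of_prime {n : ℕ} (hp : n.Prime) :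
    vonMangoldt n / n - primeWeight n = -(log n / (n * (n - 1))) := by
  have hn : (1 : ℝ) < n := by exact_mod_cast hp.one_lt
  have hne : (n : ℝ) - 1 ≠ 0 := by linarith
  rw [primeWeight, if_pos hp, vonMangoldt_apply_prime hp]
  field_simp
  ring

lemma vonMangoldt_div_sub_primeWeight_mul_log_le (n : ℕ) :
    |vonMangoldt n / n - primeWeight n| * log n ≤ 128 * (n : ℝ) ^ (-(7 / 4) : ℝ) +
      64 * {n : ℕ | IsPrimePow n ∧ ¬ n.Prime}.indicator (fun n => (n : ℝ) ^ (-(3 / 4) : ℝ)) n := by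
  have hlog := log_natCast_nonneg n
  have hlog_sq := log_mul_log_le n
  by_cases hp : n.Prime
  · have htwo : (2 : ℝ) ≤ n := by exact_mod_cast hp.two_le
    rw [vonMangoldt_div_sub_primeWeight_of_prime hp, abs_neg,
      abs_of_nonneg (div_nonneg hlog (mul_nonneg (by linarith) (by linarith))),
      Set.indicator_of_notMem (fun h => h.2 hp), mul_zero, add_zero]
    calc log n / (n * (n - 1)) * log n = log n * log n / (n * (n - 1)) := by ring
      _ ≤ 64 * (n : ℝ) ^ (1 / 4 : ℝ) / (n * (n / 2)) := by gcongr; linarith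
      _ = 128 * ((n : ℝ) ^ (1 / 4 : ℝ) * (n : ℝ) ^ (-2 : ℝ)) := by
          rw [rpow_neg (by positivity), rpow_two]; field_simp; norm_num
      _ = 128 * (n : ℝ) ^ (-(7 / 4) : ℝ) := by rw [← rpow_add (by linarith)]; norm_num
  · rw [primeWeight, if_neg hp, sub_zero,
      abs_of_nonneg (div_nonneg vonMangoldt_nonneg n.cast_nonneg)]
    refine le_add_of_nonneg_of_le (by positivity) ?_
    by_cases hpow : IsPrimePow n
    · have hn : (0 : ℝ) < n := by exact_mod_cast hpow.pos
      rw [Set.indicator_of_mem (show n ∈ {n : ℕ | IsPrimePow n ∧ ¬ n.Prime} from ⟨hpow, hp⟩)]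
      calc vonMangoldt n / n * log n ≤ log n / n * log n := by gcongr; exact vonMangoldt_le_log
        _ = log n * log n / n := by ring
        _ ≤ 64 * (n : ℝ) ^ (1 / 4 : ℝ) / n := by gcongr
        _ = 64 * ((n : ℝ) ^ (1 / 4 : ℝ) * (n : ℝ) ^ (-1 : ℝ)) := by
            rw [rpow_neg_one]; ring
        _ = 64 * (n : ℝ) ^ (-(3 / 4) : ℝ) := by rw [← rpow_add hn]; norm_num
    · rw [vonMangoldt_eq_zero_iff.mpr hpow, Set.indicator_of_notMem (fun h => hpow h.1)]
      simp

lemma summable_abs_of_summable_abs_mul_log {e : ℕ → ℝ} (he : Summable fun n => |e n| * log n) :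
    Summable fun n => |e n| := by
  have hlog_two : 0 < log 2 := log_pos (by norm_num)
  rw [← summable_nat_add_iff 2] at he ⊢
  refine (he.mul_left (1 / log 2)).of_nonneg_of_le (fun n => abs_nonneg _) fun n => ?_
  rw [one_div_mul_eq_div, le_div_iff₀ hlog_two]
  gcongr
  exact_mod_cast Nat.le_add_left 2 n

lemma summable_vonMangoldt_div_sub_primeWeight_mul_log :
    Summable fun n : ℕ => |vonMangoldt n / n - primeWeight n| * log n :=
  (((summable_nat_rpow.mpr (by norm_num)).mul_left 128).add
    (summable_indicator_primePow_not_prime.mul_left 64)).of_nonneg_of_le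
    (fun n => mul_nonneg (abs_nonneg _) (log_natCast_nonneg n))
    vonMangoldt_div_sub_primeWeight_mul_log_le

theorem exists_selbergBound_primeWeight : ∃ c R, SelbergBound primeWeight c R := by
  obtain ⟨R, hR⟩ := exists_selbergBound_vonMangoldt
  have hlog := summable_vonMangoldt_div_sub_primeWeight_mul_log
  obtain ⟨R', hR'⟩ := hR.exists_sub (by simp [primeWeight])
    (summable_abs_of_summable_abs_mul_log hlog) hlog
  simp only [sub_sub_cancel] at hR'
  exact ⟨_, R', hR'⟩

lemma summable_primeWeight_sq : Summable fun n => primeWeight n ^ 2 := by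
  refine (summable_vonMangoldt_div_sub_primeWeight_mul_log.mul_left 2).of_nonneg_of_le
    (fun n => sq_nonneg _) fun n => ?_
  by_cases hp : n.Prime
  · have htwo : (2 : ℝ) ≤ n := by exact_mod_cast hp.two_le
    have hlog := log_natCast_nonneg n
    rw [vonMangoldt_div_sub_primeWeight_of_prime hp, abs_neg,
      abs_of_nonneg (div_nonneg hlog (mul_nonneg (by linarith) (by linarith))), primeWeight,
      if_pos hp, div_pow, div_mul_eq_mul_div, mul_div_assoc',
      div_le_div_iff₀ (pow_pos (by linarith) 2) (mul_pos (by linarith) (by linarith))]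
    nlinarith [mul_nonneg (mul_nonneg hlog hlog)
      (mul_nonneg (sub_nonneg.mpr htwo) (by linarith : (0 : ℝ) ≤ n - 1))]
  · rw [primeWeight, if_neg hp, zero_pow two_ne_zero]
    exact mul_nonneg zero_le_two (mul_nonneg (abs_nonneg _) (log_natCast_nonneg n))

end PrimeWeights

section PrimePotential

open Finset Filter Topology

/-- The primes in increasing order, indexed from `nthPrime 0 = 2`. -/
noncomputable def nthPrime (k : ℕ) : ℕ := Nat.nth Nat.Prime k

/-- The proportion of integers free of the first `k` primes, `V = ∏ (1 - 1 / p)`. -/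
noncomputable def sievingDensity (k : ℕ) : ℝ := ∏ i ∈ range k, (1 - 1 / (nthPrime i : ℝ))

lemma prime_nthPrime (k : ℕ) : (nthPrime k).Prime := Nat.prime_nth_prime k

lemma two_le_nthPrime (k : ℕ) : (2 : ℝ) ≤ nthPrime k := by exact_mod_cast (prime_nthPrime k).two_le

lemma strictMono_nthPrime : StrictMono nthPrime := Nat.nth_strictMono Nat.infinite_setOfPred_prime

lemma nthPrime_count {p : ℕ} (hp : p.Prime) : nthPrime (Nat.count Nat.Prime p) = p :=
  Nat.nth_count hp

lemma tendsto_nthPrime : Tendsto (fun k => (nthPrime k : ℝ)) atTop atTop :=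
  tendsto_natCast_atTop_atTop.comp strictMono_nthPrime.tendsto_atTop

lemma tendsto_of_abs_sub_log_nthPrime_le {T : ℕ → ℝ} {C : ℝ}
    (hT : ∀ᶠ k in atTop, |T k - log (nthPrime k)| ≤ C) : Tendsto T atTop atTop :=
  tendsto_atTop_mono' _ (hT.mono fun _ hk => le_sub_iff_add_le'.mp (abs_le.mp hk).1)
    (tendsto_atTop_add_const_right _ (-C) (tendsto_log_atTop.comp tendsto_nthPrime))

lemma log_nthPrime_pos (k : ℕ) : 0 < log (nthPrime k) := log_pos (by linarith [two_le_nthPrime k])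

lemma monotone_log_nthPrime : Monotone fun k => log (nthPrime k) := fun i j hij =>
  log_le_log (by linarith [two_le_nthPrime i]) (by exact_mod_cast strictMono_nthPrime.monotone hij)

lemma sievingDensity_succ (k : ℕ) :
    sievingDensity (k + 1) = sievingDensity k * (1 - 1 / nthPrime k) :=
  prod_range_succ _ k

lemma sievingDensity_pos (k : ℕ) : 0 < sievingDensity k := by
  refine prod_pos fun i _ => ?_
  have hp := two_le_nthPrime i
  rw [sub_pos, div_lt_one (by linarith)]
  linarith

lemma antitone_sievingDensity : Antitone sievingDensity := by
  refine antitone_nat_of_succ_le fun k => ?_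
  rw [sievingDensity_succ]
  exact mul_le_of_le_one_right (sievingDensity_pos k).le (sub_le_self _ (by positivity))

lemma sievingDensity_le_one (k : ℕ) : sievingDensity k ≤ 1 :=
  (antitone_sievingDensity k.zero_le).trans_eq (prod_range_zero _)

lemma primeWeight_nthPrime (k : ℕ) :
    primeWeight (nthPrime k) = log (nthPrime k) / (nthPrime k - 1) :=
  if_pos (prime_nthPrime k)

lemma sum_Ioc_nthPrime_sub_one {φ : ℕ → ℝ} (hφ : ∀ n, ¬ n.Prime → φ n = 0) (k : ℕ) :
    ∑ n ∈ Ioc 0 (nthPrime k - 1), φ n = ∑ i ∈ range k, φ (nthPrime i) := by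
  rw [← sum_image strictMono_nthPrime.injective.injOn]
  refine (sum_subset (fun n hn => ?_) fun n hn hn_image => hφ n fun hp => hn_image ?_).symm
  · obtain ⟨i, hi, rfl⟩ := mem_image.mp hn
    have hlt : nthPrime i < nthPrime k := strictMono_nthPrime (mem_range.mp hi)
    exact mem_Ioc.mpr ⟨(prime_nthPrime i).pos, by lia⟩
  · refine mem_image.mpr ⟨Nat.count Nat.Prime n, mem_range.mpr ?_, nthPrime_count hp⟩
    rw [← strictMono_nthPrime.lt_iff_lt, nthPrime_count hp]
    have hn_le := (mem_Ioc.mp hn).2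
    have hk := (prime_nthPrime k).pos
    lia

/-- The Mertens sum `c + ∑ log p / (p - 1)` over the first `k` primes, close to `log p` for the
next prime `p` when the shift `c` is chosen well. -/
noncomputable def mertensSum (c : ℝ) (k : ℕ) : ℝ := c + ∑ i ∈ range k, primeWeight (nthPrime i)

/-- The sum over the first `k` primes of the Mertens error `mertensSum c i - log p` weighted by
`log p / (p - 1)`. Up to an additive constant it is the potential `β` of the sieve estimates. -/
noncomputable def mertensPotential (c : ℝ) (k : ℕ) : ℝ :=
  ∑ i ∈ range k, (mertensSum c i - log (nthPrime i)) * primeWeight (nthPrime i)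

lemma mertensSum_succ (c : ℝ) (k : ℕ) :
    mertensSum c (k + 1) = mertensSum c k + primeWeight (nthPrime k) := by
  rw [mertensSum, mertensSum, sum_range_succ, add_assoc]

lemma mertensPotential_succ_sub (c : ℝ) (k : ℕ) :
    mertensPotential c (k + 1) - mertensPotential c k =
      (mertensSum c k - log (nthPrime k)) * primeWeight (nthPrime k) := by
  rw [mertensPotential, mertensPotential, sum_range_succ, add_sub_cancel_left]

lemma mertensPotential_eq (c : ℝ) (k : ℕ) :
    mertensPotential c k = mertensSum c k ^ 2 / 2 - c ^ 2 / 2 -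
      (∑ i ∈ range k, primeWeight (nthPrime i) ^ 2) / 2 -
      ∑ i ∈ range k, primeWeight (nthPrime i) * log (nthPrime i) := by
  induction k with
  | zero => simp [mertensPotential, mertensSum]
  | succ k ih =>
    rw [← sub_add_cancel (mertensPotential c (k + 1)) (mertensPotential c k),
      mertensPotential_succ_sub, ih, mertensSum_succ, sum_range_succ, sum_range_succ]
    ring

lemma log_sub_log_sub_one_le {x : ℝ} (hx : 2 ≤ x) : log x - log (x - 1) ≤ 1 := by
  have h := log_add_one_sub_log_le (x := x - 1) (by linarith)
  rw [sub_add_cancel] at h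
  exact h.trans ((div_le_one (by linarith)).mpr (by linarith))

lemma exists_mertens_bounds :
    ∃ c R b : ℝ, (∀ k, |mertensSum c k - log (nthPrime k)| ≤ R) ∧
      ∀ k, |mertensPotential c k| ≤ b := by
  obtain ⟨c, R, hR⟩ := exists_selbergBound_primeWeight
  have hzero (n : ℕ) (hn : ¬ n.Prime) : primeWeight n = 0 := if_neg hn
  have hpred (k : ℕ) : 1 ≤ nthPrime k - 1 := by have := (prime_nthPrime k).two_le; lia
  have hsum (k : ℕ) : ∑ n ∈ Ioc 0 (nthPrime k - 1), primeWeight n + c = mertensSum c k := by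
    rw [sum_Ioc_nthPrime_sub_one hzero, add_comm, mertensSum]
  refine ⟨c, R + 1, c ^ 2 / 2 + (∑' i, primeWeight (nthPrime i) ^ 2) / 2 + R,
    fun k => ?_, fun k => ?_⟩
  · have hfirst := abs_le.mp (hR _ (hpred k)).1
    have htwo := two_le_nthPrime k
    rw [hsum, Nat.cast_pred (prime_nthPrime k).pos] at hfirst
    have hgap := log_sub_log_sub_one_le htwo
    have hmono : log (nthPrime k - 1 : ℝ) ≤ log (nthPrime k) :=
      log_le_log (by linarith) (by linarith)
    rw [abs_le]
    constructor <;> linarith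
  · have hsecond := abs_le.mp (hR _ (hpred k)).2
    rw [hsum, sum_Ioc_nthPrime_sub_one fun n hn => by rw [hzero n hn, zero_mul]] at hsecond
    have hsq_le : ∑ i ∈ range k, primeWeight (nthPrime i) ^ 2 ≤
        ∑' i, primeWeight (nthPrime i) ^ 2 :=
      (summable_primeWeight_sq.comp_injective strictMono_nthPrime.injective).sum_le_tsum _
        fun i _ => sq_nonneg _
    have hsq_nonneg : 0 ≤ ∑ i ∈ range k, primeWeight (nthPrime i) ^ 2 :=
      sum_nonneg fun i _ => sq_nonneg _
    rw [mertensPotential_eq, abs_le]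
    constructor <;> linarith [sq_nonneg c]

lemma abs_sum_Ico_sub_mul_le {B w : ℕ → ℝ} {b : ℝ} (hB : ∀ k, |B k| ≤ b) (hw : Antitone w)
    (hw₀ : ∀ k, 0 ≤ w k) {k j : ℕ} (hkj : k ≤ j) :
    |∑ i ∈ Ico k j, (B (i + 1) - B i) * w i| ≤ 2 * b * w k := by
  have habs_mul (i : ℕ) {x : ℝ} (hx : 0 ≤ x) : |B i * x| ≤ b * x := by
    rw [abs_mul, abs_of_nonneg hx]
    exact mul_le_mul_of_nonneg_right (hB i) hx
  have hparts : |∑ i ∈ Ico k j, (B (i + 1) - B i) * w i - B j * w j + B k * w k| ≤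
      b * (w k - w j) := by
    induction j, hkj using Nat.le_induction with
    | base => simp
    | succ j hkj ih =>
      rw [sum_Ico_succ_top hkj]
      have hlast := habs_mul (j + 1) (sub_nonneg.mpr (hw j.le_succ))
      rw [abs_le] at ih hlast ⊢
      constructor <;> linarith
  have hj := habs_mul j (hw₀ j)
  have hk := habs_mul k (hw₀ k)
  rw [abs_le] at hparts hj hk ⊢
  constructor <;> linarith

section DensityComparison

variable {c R b : ℝ}

lemma mertensSum_mul_sievingDensity_succ_sub (c : ℝ) (k : ℕ) :
    mertensSum c (k + 1) * sievingDensity (k + 1) - mertensSum c k * sievingDensity k =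
      -((mertensSum c k - log (nthPrime k)) * (sievingDensity k - sievingDensity (k + 1))) := by
  have hp := two_le_nthPrime k
  have hp₀ : (nthPrime k : ℝ) ≠ 0 := by linarith
  have hp₁ : (nthPrime k : ℝ) - 1 ≠ 0 := by linarith
  rw [mertensSum_succ, sievingDensity_succ, primeWeight_nthPrime]
  field_simp
  ring

lemma abs_mertensSum_mul_sievingDensity_sub_le (hR : ∀ k, |mertensSum c k - log (nthPrime k)| ≤ R)
    {k j : ℕ} (hkj : k ≤ j) :
    |mertensSum c j * sievingDensity j - mertensSum c k * sievingDensity k| ≤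
      R * sievingDensity k := by
  have htelescope : |mertensSum c j * sievingDensity j - mertensSum c k * sievingDensity k| ≤
      R * (sievingDensity k - sievingDensity j) := by
    induction j, hkj using Nat.le_induction with
    | base => simp
    | succ j _ ih =>
      have hdiff : 0 ≤ sievingDensity j - sievingDensity (j + 1) :=
        sub_nonneg.mpr (antitone_sievingDensity j.le_succ)
      have hstep := mul_le_mul_of_nonneg_right (hR j) hdiff
      rw [← abs_of_nonneg hdiff, ← abs_mul, ← abs_neg, ← mertensSum_mul_sievingDensity_succ_sub,
        abs_of_nonneg hdiff] at hstep
      rw [abs_le] at ih hstep ⊢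
      constructor <;> linarith
  have hR₀ : 0 ≤ R := (abs_nonneg _).trans (hR 0)
  nlinarith [mul_nonneg hR₀ (sievingDensity_pos j).le]

lemma abs_mertensSum_mul_sievingDensity_sub_le_div (hb : ∀ k, |mertensPotential c k| ≤ b)
    {k j : ℕ} (hkj : k ≤ j) :
    |mertensSum c j * sievingDensity j - mertensSum c k * sievingDensity k| ≤
      2 * b * (sievingDensity k / log (nthPrime k)) := by
  set w : ℕ → ℝ := fun i => sievingDensity (i + 1) / log (nthPrime i) with hw
  have hw_antitone : Antitone w := fun i j hij =>
    div_le_div₀ (sievingDensity_pos _).le (antitone_sievingDensity (Nat.succ_le_succ hij))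
      (log_nthPrime_pos i) (monotone_log_nthPrime hij)
  have hterm (i : ℕ) : (mertensPotential c (i + 1) - mertensPotential c i) * w i =
      -(mertensSum c (i + 1) * sievingDensity (i + 1) - mertensSum c i * sievingDensity i) := by
    have hp := two_le_nthPrime i
    have hp₀ : (nthPrime i : ℝ) ≠ 0 := by linarith
    have hp₁ : (nthPrime i : ℝ) - 1 ≠ 0 := by linarith
    have hlog := (log_nthPrime_pos i).ne'
    rw [mertensPotential_succ_sub, mertensSum_mul_sievingDensity_succ_sub]
    simp only [hw, primeWeight_nthPrime, sievingDensity_succ]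
    field_simp
    ring
  have hsum := abs_sum_Ico_sub_mul_le hb hw_antitone
    (fun i => (div_pos (sievingDensity_pos _) (log_nthPrime_pos i)).le) hkj
  simp only [hterm, sum_neg_distrib, abs_neg,
    sum_Ico_sub (fun i => mertensSum c i * sievingDensity i) hkj] at hsum
  have hb₀ : 0 ≤ b := (abs_nonneg _).trans (hb 0)
  refine hsum.trans (mul_le_mul_of_nonneg_left ?_ (by positivity))
  exact div_le_div_of_nonneg_right (antitone_sievingDensity k.le_succ) (log_nthPrime_pos k).le

lemma exists_abs_div_sievingDensity_sub_le (hR : ∀ k, |mertensSum c k - log (nthPrime k)| ≤ R)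
    (hb : ∀ k, |mertensPotential c k| ≤ b) :
    ∃ κ, ∀ k, |κ / sievingDensity k - mertensSum c k| ≤ R ∧
      |κ / sievingDensity k - mertensSum c k| * log (nthPrime k) ≤ 2 * b := by
  set x : ℕ → ℝ := fun k => mertensSum c k * sievingDensity k with hx
  have hb₀ : 0 ≤ b := (abs_nonneg _).trans (hb 0)
  have hcauchy : CauchySeq x := by
    refine cauchySeq_of_le_tendsto_0' (fun k => 2 * b / log (nthPrime k)) (fun k j hkj => ?_)
      ((tendsto_log_atTop.comp tendsto_nthPrime).const_div_atTop (2 * b))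
    rw [dist_comm, dist_eq, ← mul_one_div]
    refine (abs_mertensSum_mul_sievingDensity_sub_le_div hb hkj).trans ?_
    have := (log_nthPrime_pos k).le
    gcongr
    exact sievingDensity_le_one k
  obtain ⟨κ, hκ⟩ := cauchySeq_tendsto_of_complete hcauchy
  have hlim_le {k : ℕ} {y : ℝ} (hy : ∀ j, k ≤ j → |x j - x k| ≤ y) : |κ - x k| ≤ y :=
    le_of_tendsto (hκ.sub_const _).abs (eventually_atTop.mpr ⟨k, hy⟩)
  refine ⟨κ, fun k => ?_⟩
  have hV := sievingDensity_pos k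
  have hdiff : κ / sievingDensity k - mertensSum c k = (κ - x k) / sievingDensity k := by
    rw [hx, sub_div, mul_div_cancel_right₀ _ hV.ne']
  rw [hdiff, abs_div, abs_of_pos hV, div_le_iff₀ hV, div_mul_eq_mul_div, div_le_iff₀ hV,
    ← le_div_iff₀ (log_nthPrime_pos k), mul_div_assoc]
  exact ⟨hlim_le fun j hkj => abs_mertensSum_mul_sievingDensity_sub_le hR hkj,
    hlim_le fun j hkj => abs_mertensSum_mul_sievingDensity_sub_le_div hb hkj⟩

end DensityComparison

lemma abs_mul_div_sub_mul_div_le {p t m L R b : ℝ} (hp : 1 < p) (ht : 0 ≤ t) (htp : t ≤ p - 1)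
    (hm : |m - t| ≤ R) (hL : |L - m| ≤ R) (hLt : |L - m| * t ≤ 2 * b) :
    |(m - t) * (t / (p - 1)) - (L - t) * L / p| ≤ (R + 4 * R ^ 2 + 2 * b) / p := by
  have hR : 0 ≤ R := (abs_nonneg _).trans hm
  have hp₀ : 0 < p := by linarith
  have hp₁ : p - 1 ≠ 0 := by linarith
  have hexpand : (m - t) * (t / (p - 1)) - (L - t) * L / p = ((m - t) * (t / (p - 1)) -
      (m - t) * (L - t) - (L - m) * t - (L - m) * (L - t)) / p := by
    field_simp
    ring
  have hLt_le : |L - t| ≤ 2 * R := (abs_sub_le L m t).trans (by linarith)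
  have hweight : |t / (p - 1)| ≤ 1 := by
    rw [abs_of_nonneg (div_nonneg ht (by linarith)), div_le_one (by linarith)]
    exact htp
  have h₁ : |(m - t) * (t / (p - 1))| ≤ R * 1 := by rw [abs_mul]; gcongr
  have h₂ : |(m - t) * (L - t)| ≤ R * (2 * R) := by rw [abs_mul]; gcongr
  have h₃ : |(L - m) * t| ≤ 2 * b := by rwa [abs_mul, abs_of_nonneg ht]
  have h₄ : |(L - m) * (L - t)| ≤ R * (2 * R) := by rw [abs_mul]; gcongr
  rw [hexpand, abs_div, abs_of_pos hp₀]
  gcongr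
  rw [abs_le] at h₁ h₂ h₃ h₄ ⊢
  constructor <;> linarith

theorem exists_eventually_sieveStep :
    ∃ (κ C₀ C₁ B : ℝ) (β : ℕ → ℝ), 0 < κ ∧ ∀ᶠ k in atTop,
      SieveStep C₀ C₁ B (sievingDensity k / κ) (nthPrime k) (β k) (β (k + 1)) := by
  obtain ⟨c, R, b, hR, hb⟩ := exists_mertens_bounds
  obtain ⟨κ, hκ⟩ := exists_abs_div_sievingDensity_sub_le hR hb
  have hdiscrepancy (k : ℕ) : |κ / sievingDensity k - log (nthPrime k)| ≤ 2 * R :=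
    (abs_sub_le _ (mertensSum c k) _).trans (by linarith [(hκ k).1, hR k])
  have hlarge : Tendsto (fun k => κ / sievingDensity k) atTop atTop :=
    tendsto_of_abs_sub_log_nthPrime_le (.of_forall hdiscrepancy)
  obtain ⟨k₀, hk₀⟩ := (hlarge.eventually_gt_atTop 0).exists
  have hκ_pos : 0 < κ := (div_pos_iff_of_pos_right (sievingDensity_pos k₀)).mp hk₀
  refine ⟨κ, 2 * R, R + 4 * R ^ 2 + 2 * b, 2 * b, fun k => mertensPotential c k + b, hκ_pos, ?_⟩
  filter_upwards [tendsto_nthPrime.eventually_ge_atTop 100, hlarge.eventually_ge_atTop (8 * R)]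
    with k hp hv
  have hV := sievingDensity_pos k
  have hinv : 1 / (sievingDensity k / κ) = κ / sievingDensity k := one_div_div _ _
  have hpotential := abs_le.mp (hb (k + 1))
  refine ⟨hp, by positivity, hinv ▸ hdiscrepancy k, ?_, by linarith, by linarith, ?_⟩
  · rw [le_div_iff₀ hV] at hv
    rw [mul_div_assoc', div_le_iff₀ hκ_pos]
    linarith
  · rw [add_sub_add_right_eq_sub, mertensPotential_succ_sub, primeWeight_nthPrime, hinv,
      ← div_div, div_div_eq_mul_div, mul_div_assoc]
    exact abs_mul_div_sub_mul_div_le (by linarith) (log_nthPrime_pos k).le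
      (log_le_sub_one_of_pos (by linarith)) (hR k) (hκ k).1 (hκ k).2

end PrimePotential

section Sifting

open Finset Filter Topology

/-- The integers in `(u, u + X]` divisible by none of the first `k` primes. -/
noncomputable def sifted (u X : ℝ) (k : ℕ) : Finset ℕ :=
  {n ∈ Ioc ⌊u⌋₊ ⌊u + X⌋₊ | ∀ i < k, ¬ nthPrime i ∣ n}

lemma mem_sifted {u X : ℝ} {k n : ℕ} (hu : 0 ≤ u) (hX : 0 ≤ X) :
    n ∈ sifted u X k ↔ (u < n ∧ n ≤ u + X) ∧ ∀ i < k, ¬ nthPrime i ∣ n := by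
  rw [sifted, mem_filter, mem_Ioc, Nat.floor_lt hu, Nat.le_floor_iff (by linarith)]

lemma card_filter_dvd_sifted {u X : ℝ} {k p : ℕ} (hu : 0 ≤ u) (hX : 0 ≤ X) (hp : p.Prime)
    (hkp : nthPrime k ≤ p) : #{n ∈ sifted u X k | p ∣ n} = #(sifted (u / p) (X / p) k) := by
  have hp₀ : (0 : ℝ) < p := by exact_mod_cast hp.pos
  have hmem (m : ℕ) : p * m ∈ sifted u X k ↔ m ∈ sifted (u / p) (X / p) k := by
    rw [mem_sifted hu hX, mem_sifted (by positivity) (by positivity), ← add_div, div_lt_iff₀' hp₀,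
      le_div_iff₀' hp₀, Nat.cast_mul]
    refine and_congr_right' (forall₂_congr fun i hi => not_congr ?_)
    have hi_lt : nthPrime i < p := (strictMono_nthPrime hi).trans_le hkp
    exact ((Nat.coprime_primes (prime_nthPrime i) hp).mpr hi_lt.ne).dvd_mul_left
  refine (card_bij (fun m _ => p * m) (fun m hm => ?_) (fun _ _ _ _ h => ?_) fun n hn => ?_).symm
  · exact mem_filter.mpr ⟨(hmem m).mpr hm, dvd_mul_right p m⟩
  · exact Nat.eq_of_mul_eq_mul_left hp.pos h
  · obtain ⟨hn, m, rfl⟩ := mem_filter.mp hn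
    exact ⟨m, (hmem m).mp hn, rfl⟩

lemma card_sifted_succ {u X : ℝ} (hu : 0 ≤ u) (hX : 0 ≤ X) (k : ℕ) :
    (#(sifted u X (k + 1)) : ℝ) =
      #(sifted u X k) - #(sifted (u / nthPrime k) (X / nthPrime k) k) := by
  have hnot_dvd : {n ∈ sifted u X k | ¬ nthPrime k ∣ n} = sifted u X (k + 1) := by
    simp only [sifted, filter_filter, Nat.forall_lt_succ_right]
  rw [← card_filter_dvd_sifted hu hX (prime_nthPrime k) le_rfl, ← hnot_dvd, eq_sub_iff_add_eq',
    ← Nat.cast_add, card_filter_add_card_filter_not]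

lemma abs_card_sifted_sub_le (k : ℕ) {u X : ℝ} (hu : 0 ≤ u) (hX : 0 ≤ X) :
    |#(sifted u X k) - X * sievingDensity k| ≤ 2 ^ k := by
  induction k generalizing u X with
  | zero =>
    have hcard : (#(sifted u X 0) : ℝ) = ⌊u + X⌋₊ - ⌊u⌋₊ := by
      rw [← Nat.cast_sub (Nat.floor_mono (by linarith)), ← Nat.card_Ioc]
      simp [sifted]
    have hfloor_u := Nat.lt_floor_add_one u
    have hfloor_add := Nat.lt_floor_add_one (u + X)
    rw [hcard, sievingDensity, prod_range_zero, abs_le]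
    constructor <;> linarith [Nat.floor_le hu, Nat.floor_le (add_nonneg hu hX)]
  | succ k ih =>
    have hp : (0 : ℝ) ≤ nthPrime k := Nat.cast_nonneg _
    have hquot := ih (div_nonneg hu hp) (div_nonneg hX hp)
    rw [card_sifted_succ hu hX, sievingDensity_succ]
    calc _ = |(#(sifted u X k) - X * sievingDensity k) -
          (#(sifted (u / nthPrime k) (X / nthPrime k) k) -
            X / nthPrime k * sievingDensity k)| := by ring_nf
      _ ≤ 2 ^ k + 2 ^ k := (abs_sub _ _).trans (add_le_add (ih hu hX) hquot)
      _ = 2 ^ (k + 1) := by ring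

lemma card_sifted_le {X u : ℝ} (hu : 0 ≤ u) (hX : 0 ≤ X) (k : ℕ) : #(sifted u X k) ≤ X + 1 := by
  have hsub : sifted u X k ⊆ sifted u X 0 := fun n hn => by
    rw [mem_sifted hu hX] at hn ⊢
    exact ⟨hn.1, fun i hi => absurd hi i.not_lt_zero⟩
  have hcard : (#(sifted u X k) : ℝ) ≤ #(sifted u X 0) := by exact_mod_cast card_le_card hsub
  have hzero := (abs_le.mp (abs_card_sifted_sub_le 0 hu hX)).2
  rw [sievingDensity, prod_range_zero] at hzero
  linarith

end Sifting

section SieveInduction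

open Finset Filter Topology

/-- The estimate `ε * #(sifted u X k) ≤ c * X * G s` for all intervals for which
`s = (log X - a) * v` is at least `d`. It is an upper bound sieve for `ε = 1` and a lower bound
sieve for `ε = -1`. -/
def SieveEstimate (ε c : ℝ) (G : ℝ → ℝ) (d v a : ℝ) (k : ℕ) : Prop :=
  ∀ u X, 0 ≤ u → 0 < X → d ≤ (log X - a) * v → ε * #(sifted u X k) ≤ c * X * G ((log X - a) * v)

variable {Φ Ψ H G G' : ℝ → ℝ} {ε c d d' v a K m M M' C₀ C₁ B β β' : ℝ} {k : ℕ}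

lemma SieveEstimate.mono (h : SieveEstimate ε c G d v a k) (hc : 0 ≤ c) (hd : d ≤ d')
    (hG : ∀ s, d' ≤ s → G s ≤ G' s) : SieveEstimate ε c G' d' v a k := fun u X hu hX hs =>
  (h u X hu hX (hd.trans hs)).trans (mul_le_mul_of_nonneg_left (hG _ hs) (mul_nonneg hc hX.le))

lemma SieveEstimate.mono_shift {A : ℝ} (h : SieveEstimate ε c G d v a k) (hc : 0 ≤ c) (hv : 0 ≤ v)
    (ha : a ≤ A) (hG : ∀ r s, d ≤ r → r ≤ s → G s ≤ G r) : SieveEstimate ε c G d v A k := by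
  intro u X hu hX hs
  have hle : (log X - A) * v ≤ (log X - a) * v := by gcongr
  exact (h u X hu hX (hs.trans hle)).trans
    (mul_le_mul_of_nonneg_left (hG _ _ hs hle) (mul_nonneg hc hX.le))

lemma SieveEstimate.extend (h : SieveEstimate ε c G d v a k) (hε : ε ≤ 0) (hc : 0 ≤ c)
    (hG : ∀ s, s < d → 0 ≤ G s) (d' : ℝ) : SieveEstimate ε c G d' v a k := by
  intro u X hu hX _
  obtain hlt | hge := lt_or_ge ((log X - a) * v) d
  · exact (mul_nonpos_of_nonpos_of_nonneg hε (Nat.cast_nonneg _)).trans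
      (mul_nonneg (mul_nonneg hc hX.le) (hG _ hlt))
  · exact h u X hu hX hge

lemma sieveBound_le {s : ℝ} (hβ : 0 ≤ β) (hv : 0 ≤ v) (hH : 0 ≤ H s) :
    sieveBound Φ H M β v s ≤ v * Φ s + M * v ^ 3 * exp (-s) := by
  have : 0 ≤ β * v ^ 3 * H s := by positivity
  rw [sieveBound]
  linarith

lemma SieveStep.le_of_le_succ (h : SieveStep C₀ C₁ B v (nthPrime k) β β') (hd : 0 < d)
    (hM' : 0 ≤ M') {L : ℝ}
    (hs : d ≤ (L - M' * v / nthPrime k) * (v * (1 - 1 / nthPrime k))) : 0 < L ∧ d ≤ L * v := by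
  have hv := h.density_pos.le
  have hpos : 0 < L - M' * v / nthPrime k :=
    pos_of_mul_pos_left (hd.trans_le hs) h.next_density_pos.le
  have hle : L - M' * v / nthPrime k ≤ L := sub_le_self L (by positivity)
  exact ⟨hpos.trans_le hle,
    hs.trans (mul_le_mul hle h.next_density_le h.next_density_pos.le (hpos.le.trans hle))⟩

theorem SieveEstimate.succ (hstep : SieveStep C₀ C₁ B v (nthPrime k) β β')
    (g : SieveMajorant Φ Ψ H d K m) (hd : 1 / 8 ≤ d) (hc : 0 ≤ c) (hK : 0 ≤ K) (hM₀ : 0 ≤ M)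
    (hM' : 0 ≤ M') (hm : 32 * M ≤ m * M')
    (hM : 3 * K * (C₀ ^ 2 + C₁ + B * (1 + 8 * M' * v ^ 2)) ≤ M)
    (hΦ : SieveEstimate ε c (sieveBound Φ H M β v) d v a k)
    (hΨ : SieveEstimate (-ε) c (fun s => v * Ψ s + M * v ^ 3 * exp (-s)) (d - 5 / 4) v a k) :
    SieveEstimate ε c (sieveBound Φ H M β' (v * (1 - 1 / nthPrime k))) d
      (v * (1 - 1 / nthPrime k)) (a + M' * v / nthPrime k) (k + 1) := by
  intro u X hu hX hs
  rw [← sub_sub] at hs ⊢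
  have hp : (0 : ℝ) < nthPrime k := by linarith [hstep.prime_ge]
  obtain ⟨hL, hs_le⟩ := hstep.le_of_le_succ (by linarith) hM' hs
  have hlog : log (X / nthPrime k) - a = log X - a - log (nthPrime k) := by
    rw [log_div hX.ne' hp.ne', sub_right_comm]
  have hdual := hΨ (u / nthPrime k) (X / nthPrime k) (by positivity) (by positivity) (by
    rw [hlog, hstep.sub_log_mul_eq]
    linarith [(abs_le.mp hstep.abs_discrepancy_mul_le).1, hstep.const_mul_density_le])
  rw [hlog] at hdual
  have hadd := mul_le_mul_of_nonneg_left
    (hstep.sieveBound_add_le g hd hK hM' hm hM hM₀ hL hs) (mul_nonneg hc hX.le)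
  rw [card_sifted_succ hu hX.le]
  linear_combination hΦ u X hu hX hs_le + hdual + hadd

theorem sieveEstimate_base {l : ℝ} (g : SieveMajorant Φ Ψ H d K m) (hd : 0 < d) (hc : 0 ≤ c)
    (hK : 0 ≤ K) (hv : 0 < v) (hv₁ : v ≤ 1) (hε : |ε| ≤ 1) (hl : c * v * l = sievingDensity k)
    (hΦ : ∀ s, 0 < s → ε * l ≤ Φ s) (hβ : 0 ≤ β) (hβB : β ≤ B)
    (hM : 2 ^ k ≤ c * v ^ 3 * (M - B * K)) :
    SieveEstimate ε c (sieveBound Φ H M β v) d v 0 k := by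
  intro u X hu hX hs
  rw [sub_zero] at hs ⊢
  set s := log X * v
  have hs₀ : 0 < s := hd.trans_le hs
  have hmain : ε * (X * sievingDensity k) ≤ c * X * (v * Φ s) := by
    rw [← hl]
    calc _ = c * X * (v * (ε * l)) := by ring
      _ ≤ _ := by gcongr; exact hΦ s hs₀
  have hcard : ε * (#(sifted u X k) - X * sievingDensity k) ≤ 2 ^ k :=
    calc _ ≤ |ε| * |#(sifted u X k) - X * sievingDensity k| :=
          (le_abs_self _).trans_eq (abs_mul _ _)
      _ ≤ 1 * 2 ^ k := mul_le_mul hε (abs_card_sifted_sub_le k hu hX.le) (abs_nonneg _) one_pos.le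
      _ = 2 ^ k := one_mul _
  have hexp : 1 ≤ X * exp (-s) := by
    have hlog : 0 ≤ log X := (pos_of_mul_pos_left hs₀ hv.le).le
    rw [exp_neg, ← div_eq_mul_inv, one_le_div (exp_pos s), ← le_log_iff_exp_le hX]
    exact mul_le_of_le_one_right hlog hv₁
  have hH : β * H s ≤ B * K * exp (-s) := by
    rw [mul_assoc]
    refine mul_le_mul hβB ((g.slope_le s hs).trans ?_) (g.slope_nonneg s hs) (hβ.trans hβB)
    gcongr
    linarith
  have hexp_le : 2 ^ k ≤ X * exp (-s) * (c * v ^ 3 * (M - B * K)) :=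
    hM.trans (le_mul_of_one_le_left ((by positivity : (0 : ℝ) ≤ 2 ^ k).trans hM) hexp)
  have hslope := mul_le_mul_of_nonneg_left hH (by positivity : 0 ≤ c * X * v ^ 3)
  rw [sieveBound]
  linear_combination hmain + hcard + hexp_le + hslope

lemma exists_sieve_parameters {κ : ℝ} {β : ℕ → ℝ} (hκ : 0 < κ) (hc : 0 < c) (hm : 0 < m)
    (hstep : ∀ᶠ k in atTop,
      SieveStep C₀ C₁ B (sievingDensity k / κ) (nthPrime k) (β k) (β (k + 1))) :
    ∃ (k₀ : ℕ) (M M' : ℝ), 0 ≤ M ∧ 0 ≤ M' ∧ 32 * M ≤ m * M' ∧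
      sievingDensity k₀ / κ ≤ 1 ∧ 0 ≤ β k₀ ∧ β k₀ ≤ B ∧
      2 ^ k₀ ≤ c * (sievingDensity k₀ / κ) ^ 3 * (M - B * K) ∧ ∀ k, k₀ ≤ k →
        SieveStep C₀ C₁ B (sievingDensity k / κ) (nthPrime k) (β k) (β (k + 1)) ∧
        3 * K * (C₀ ^ 2 + C₁ + B * (1 + 8 * M' * (sievingDensity k / κ) ^ 2)) ≤ M := by
  have hT : Tendsto (fun k => κ / sievingDensity k) atTop atTop :=
    tendsto_of_abs_sub_log_nthPrime_le (hstep.mono fun k hk => one_div_div _ κ ▸ hk.discrepancy_le)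
  have hv : Tendsto (fun k => sievingDensity k / κ) atTop (𝓝 0) := by
    exact hT.inv_tendsto_atTop.congr fun k => inv_div _ _
  have hsmall : Tendsto (fun k => 1536 * K * B * (sievingDensity k / κ) ^ 2) atTop (𝓝 0) := by
    simpa using (hv.pow 2).const_mul (1536 * K * B)
  obtain ⟨j, hj⟩ := eventually_atTop.mp
    (hstep.and ((hv.eventually_le_const one_pos).and (hsmall.eventually_le_const hm)))
  have hβ := hj j le_rfl |>.1
  have hv₀ : 0 < c * (sievingDensity (j + 1) / κ) ^ 3 :=
    mul_pos hc (pow_pos (div_pos (sievingDensity_pos _) hκ) 3)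
  obtain ⟨M, hM₀, hM₁, hM₂⟩ : ∃ M, 0 ≤ M ∧ 6 * K * (C₀ ^ 2 + C₁ + B) ≤ M ∧
      2 ^ (j + 1) / (c * (sievingDensity (j + 1) / κ) ^ 3) + B * K ≤ M :=
    ⟨_, le_max_left 0 (max _ _), (le_max_left _ _).trans (le_max_right _ _),
      (le_max_right _ _).trans (le_max_right _ _)⟩
  refine ⟨j + 1, M, 32 * M / m, hM₀, by positivity, by field_simp; rfl, (hj _ j.le_succ).2.1,
    hβ.potential_nonneg, hβ.potential_le, ?_, fun k hk => ?_⟩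
  · rwa [← div_le_iff₀' hv₀, le_sub_iff_add_le]
  · obtain ⟨hstep_k, -, hsmall_k⟩ := hj k (j.le_succ.trans hk)
    refine ⟨hstep_k, ?_⟩
    have hshift : 3 * K * (B * (8 * (32 * M / m) * (sievingDensity k / κ) ^ 2)) ≤ M / 2 := by
      calc _ = M / (2 * m) * (1536 * K * B * (sievingDensity k / κ) ^ 2) := by ring
        _ ≤ M / (2 * m) * m := by gcongr
        _ = M / 2 := by field_simp
    linear_combination hshift + hM₁ / 2

/-- The pair of upper and lower bound estimates that is carried from `k` to `k + 1`. -/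
structure LinearSieveEstimate (c M β v a : ℝ) (k : ℕ) : Prop where
  upper : SieveEstimate 1 c
    (sieveBound upperFun (fun s => lowerFunDeriv (s - 1)) M β v) (1 / 8) v a k
  lower : SieveEstimate (-1) c
    (sieveBound (fun s => -lowerFun s) (fun s => -upperFunDeriv (s - 1)) M β v) 2 v a k

lemma LinearSieveEstimate.upper_weak (h : LinearSieveEstimate c M β v a k) (hc : 0 ≤ c)
    (hv : 0 ≤ v) (hβ : 0 ≤ β) :
    SieveEstimate 1 c (fun s => v * upperFun s + M * v ^ 3 * exp (-s)) (1 / 8) v a k :=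
  h.upper.mono hc le_rfl fun s _ => sieveBound_le hβ hv (lowerFunDeriv_nonneg (s - 1))

lemma LinearSieveEstimate.lower_weak (h : LinearSieveEstimate c M β v a k) (hc : 0 ≤ c)
    (hv : 0 ≤ v) (hβ : 0 ≤ β) :
    SieveEstimate (-1) c (fun s => v * -lowerFun s + M * v ^ 3 * exp (-s)) 2 v a k :=
  h.lower.mono hc le_rfl fun s hs =>
    sieveBound_le hβ hv (neg_nonneg.mpr (upperFunDeriv_neg (by linarith)).le)

theorem LinearSieveEstimate.succ {m₁ m₂ : ℝ} (h : LinearSieveEstimate c M β v a k)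
    (hstep : SieveStep C₀ C₁ B v (nthPrime k) β β')
    (g₁ : SieveMajorant upperFun (fun s => -lowerFun s) (fun s => lowerFunDeriv (s - 1))
      (1 / 8) K m₁)
    (g₂ : SieveMajorant (fun s => -lowerFun s) upperFun (fun s => -upperFunDeriv (s - 1)) 2 K m₂)
    (hc : 0 ≤ c) (hβ : 0 ≤ β) (hK : 0 ≤ K) (hM₀ : 0 ≤ M) (hM' : 0 ≤ M')
    (hm₁ : 32 * M ≤ m₁ * M') (hm₂ : 32 * M ≤ m₂ * M')
    (hM : 3 * K * (C₀ ^ 2 + C₁ + B * (1 + 8 * M' * v ^ 2)) ≤ M) :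
    LinearSieveEstimate c M β' (v * (1 - 1 / nthPrime k)) (a + M' * v / nthPrime k) (k + 1) := by
  have hv := hstep.density_pos.le
  refine ⟨h.upper.succ hstep g₁ le_rfl hc hK hM₀ hM' hm₁ hM ?_,
    h.lower.succ hstep g₂ (by norm_num) hc hK hM₀ hM' hm₂ hM ?_⟩
  · refine (h.lower_weak hc hv hβ).extend (by norm_num) hc (fun s hs => ?_) _
    rw [lowerFun_of_le_two hs.le]
    positivity
  · rw [neg_neg]
    exact (h.upper_weak hc hv hβ).mono hc (by norm_num) fun _ _ => le_rfl

theorem exists_linearSieveEstimate :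
    ∃ (κ C₀ c M M' : ℝ) (β : ℕ → ℝ) (k₀ : ℕ), 0 < κ ∧ 0 < c ∧ 0 ≤ M ∧ 0 ≤ M' ∧ ∀ k ≥ k₀,
      0 ≤ β k ∧ |κ / sievingDensity k - log (nthPrime k)| ≤ C₀ ∧
      LinearSieveEstimate c M (β k) (sievingDensity k / κ)
        (M' * (sievingDensity k₀ / κ - sievingDensity k / κ)) k := by
  obtain ⟨κ, C₀, C₁, B, β, hκ, hstep⟩ := exists_eventually_sieveStep
  obtain ⟨m₁, hm₁, g₁⟩ := exists_sieveMajorant_upperFun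
  obtain ⟨m₂, hm₂, g₂⟩ := exists_sieveMajorant_lowerFun
  obtain ⟨l, hl, hlower, hupper⟩ := exists_pos_between_lowerFun_upperFun
  have hK : 0 ≤ 2160 * exp 22 := by positivity
  obtain ⟨k₀, M, M', hM₀, hM', hm, hv₁, hβ, hβB, hbase, hind⟩ :=
    exists_sieve_parameters hκ (div_pos hκ hl) (lt_min hm₁ hm₂) hstep
  have hv (k : ℕ) : 0 < sievingDensity k / κ := div_pos (sievingDensity_pos k) hκ
  refine ⟨κ, C₀, κ / l, M, M', β, k₀, hκ, div_pos hκ hl, hM₀, hM', fun k hk => ?_⟩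
  rw [← one_div_div (sievingDensity k) κ]
  suffices 0 ≤ β k ∧ LinearSieveEstimate (κ / l) M (β k) (sievingDensity k / κ)
      (M' * (sievingDensity k₀ / κ - sievingDensity k / κ)) k from
    ⟨this.1, (hind k hk).1.discrepancy_le, this.2⟩
  induction k, hk using Nat.le_induction with
  | base =>
    have hl' : κ / l * (sievingDensity k₀ / κ) * l = sievingDensity k₀ := by field_simp
    rw [sub_self, mul_zero]
    refine ⟨hβ, ?_, ?_⟩
    · exact sieveEstimate_base g₁ (by norm_num) (div_pos hκ hl).le hK (hv k₀) hv₁ (by simp) hl'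
        (fun s hs => by simpa only [one_mul] using hupper s hs) hβ hβB hbase
    · exact sieveEstimate_base g₂ two_pos (div_pos hκ hl).le hK (hv k₀) hv₁ (by simp) hl'
        (fun s _ => by linarith [hlower s]) hβ hβB hbase
  | succ k hk ih =>
    obtain ⟨hβ_k, hest⟩ := ih
    obtain ⟨hstep_k, hM_k⟩ := hind k hk
    have hsucc := hest.succ hstep_k g₁ g₂ (div_pos hκ hl).le hβ_k hK hM₀ hM'
      (hm.trans (by gcongr; exact min_le_left _ _)) (hm.trans (by gcongr; exact min_le_right _ _))
      hM_k
    refine ⟨hstep_k.potential_nonneg, ?_⟩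
    have hnext : sievingDensity (k + 1) / κ =
        sievingDensity k / κ * (1 - 1 / nthPrime k) := by rw [sievingDensity_succ]; ring
    convert hsucc using 1
    rw [hnext]
    ring

theorem exists_uniform_sieveEstimate :
    ∃ κ C₀ c M A : ℝ, 0 < κ ∧ 0 < c ∧ 0 ≤ M ∧ ∀ᶠ k in atTop,
      |κ / sievingDensity k - log (nthPrime k)| ≤ C₀ ∧
      SieveEstimate 1 c (fun s => sievingDensity k / κ * upperFun s +
        M * (sievingDensity k / κ) ^ 3) (1 / 8) (sievingDensity k / κ) A k ∧
      SieveEstimate (-1) c (fun s => sievingDensity k / κ * -lowerFun s +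
        M * (sievingDensity k / κ) ^ 3) 2 (sievingDensity k / κ) A k := by
  obtain ⟨κ, C₀, c, M, M', β, k₀, hκ, hc, hM, hM', h⟩ := exists_linearSieveEstimate
  refine ⟨κ, C₀, c, M, M' * (sievingDensity k₀ / κ), hκ, hc, hM, ?_⟩
  filter_upwards [eventually_ge_atTop k₀] with k hk
  obtain ⟨hβ, hdiscrepancy, hest⟩ := h k hk
  have hv : 0 ≤ sievingDensity k / κ := div_nonneg (sievingDensity_pos k).le hκ.le
  have hshift : M' * (sievingDensity k₀ / κ - sievingDensity k / κ) ≤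
      M' * (sievingDensity k₀ / κ) := by gcongr; exact sub_le_self _ hv
  have hexp {s : ℝ} (hs : 0 ≤ s) : M * (sievingDensity k / κ) ^ 3 * exp (-s) ≤
      M * (sievingDensity k / κ) ^ 3 :=
    mul_le_of_le_one_right (by positivity) (exp_le_one_iff.mpr (neg_nonpos.mpr hs))
  refine ⟨hdiscrepancy, ?_, ?_⟩
  · refine ((hest.upper_weak hc.le hv hβ).mono hc.le le_rfl fun s hs =>
      add_le_add le_rfl (hexp (by linarith))).mono_shift hc.le hv hshift fun r s hr hrs => ?_
    have hr₀ : 0 < r := by linarith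
    gcongr
    exact antitoneOn_upperFun hr₀ (hr₀.trans_le hrs) hrs
  · refine ((hest.lower_weak hc.le hv hβ).mono hc.le le_rfl fun s hs =>
      add_le_add le_rfl (hexp (by linarith))).mono_shift hc.le hv hshift fun r s _ hrs => ?_
    gcongr
    exact monotone_lowerFun hrs

end SieveInduction

section Turan

open Finset

theorem sq_card_le_cliqueNum_mul {V : Type*} [Fintype V] [DecidableEq V] (G : SimpleGraph V)
    [DecidableRel G.Adj] :
    Fintype.card V ^ 2 ≤ G.cliqueNum * (Fintype.card V + 2 * #Gᶜ.edgeFinset) := by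
  set n := Fintype.card V
  set r := G.cliqueNum
  obtain hn | hn := n.eq_zero_or_pos
  · simp [hn]
  have hr : 1 ≤ r := by
    obtain ⟨v⟩ := Fintype.card_pos_iff.mp hn
    exact SimpleGraph.IsClique.card_le_cliqueNum (t := {v}) (tc := by simp)
  have hfree : G.CliqueFree (r + 1) := fun s hs =>
    (SimpleGraph.IsClique.card_le_cliqueNum (tc := hs.isClique)).not_gt (by rw [hs.card_eq]; omega)
  have hturan : 2 * r * #G.edgeFinset ≤ (r - 1) * n ^ 2 := by
    refine le_trans ?_ (SimpleGraph.mul_card_edgeFinset_turanGraph_le (n := n) (r := r))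
    rw [SimpleGraph.card_edgeFinset_turanGraph]
    exact Nat.mul_le_mul_left _ hfree.card_edgeFinset_le
  have hdeg : n ^ 2 = n + 2 * #G.edgeFinset + 2 * #Gᶜ.edgeFinset := by
    rw [← G.sum_degrees_eq_twice_card_edges, ← Gᶜ.sum_degrees_eq_twice_card_edges, add_assoc,
      ← sum_add_distrib]
    have hsum (v : V) : G.degree v + Gᶜ.degree v = n - 1 := by
      rw [G.degree_compl]
      have := G.degree_lt_card_verts v
      omega
    simp only [hsum, sum_const, card_univ, smul_eq_mul]
    change n ^ 2 = n + n * (n - 1)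
    obtain ⟨j, hj⟩ := Nat.exists_eq_add_of_le' hn
    rw [hj, Nat.add_sub_cancel]
    ring
  zify [hr] at hturan hdeg ⊢
  linear_combination hturan + r * hdeg

theorem exists_pairwise_subset {α : Type*} (r : α → α → Prop) [Std.Symm r] (s : Finset α)
    [DecidableRel r] : ∃ t ⊆ s, (t : Set α).Pairwise r ∧
      #s ^ 2 ≤ #t * (#s + #{x ∈ s.offDiag | ¬ r x.1 x.2}) := by
  classical
  let G : SimpleGraph s :=
    { Adj := fun a b => a ≠ b ∧ r a b, symm := ⟨fun _ _ h => ⟨h.1.symm, symm h.2⟩⟩ }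
  have : DecidableRel G.Adj := fun a b => inferInstanceAs (Decidable (a ≠ b ∧ r a b))
  obtain ⟨t, ht⟩ := G.exists_isNClique_cliqueNum
  have hedges : 2 * #Gᶜ.edgeFinset ≤ #{x ∈ s.offDiag | ¬ r x.1 x.2} := by
    rw [← Gᶜ.dart_card_eq_twice_card_edges, ← card_univ]
    refine card_le_card_of_injOn (fun d => ((d.fst : α), (d.snd : α)))
      (fun d _ => ?_) fun d _ e _ h => ?_
    · have hd := d.adj
      rw [SimpleGraph.compl_adj] at hd
      have hne : (d.fst : α) ≠ d.snd := fun h => hd.1 (Subtype.ext h)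
      exact mem_filter.mpr ⟨mem_offDiag.mpr ⟨d.fst.2, d.snd.2, hne⟩, fun h => hd.2 ⟨hd.1, h⟩⟩
    · rw [Prod.mk.injEq] at h
      exact SimpleGraph.Dart.ext _ _ (Prod.ext (Subtype.ext h.1) (Subtype.ext h.2))
  refine ⟨t.map (Function.Embedding.subtype _), map_subtype_subset t, ?_, ?_⟩
  · rw [coe_map]
    rintro _ ⟨a, ha, rfl⟩ _ ⟨b, hb, rfl⟩ hne
    exact (ht.isClique ha hb fun h => hne (congrArg _ h)).2
  · rw [card_map, ht.card_eq, ← Fintype.card_coe s]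
    exact (sq_card_le_cliqueNum_mul G).trans (by gcongr)

end Turan

section PrimeSums

open Finset Chebyshev

lemma sum_log_div_sq_le_sub {w N : ℕ} (hw : 0 < w) (hN : w ≤ N) :
    ∑ p ∈ Ioc w N with p.Prime, log p / p ^ 2 ≤
      theta N / N ^ 2 + 2 * log 4 / w - 2 * log 4 / N := by
  induction N, hN using Nat.le_induction with
  | base =>
    simp only [Ioc_self, filter_empty, sum_empty, add_sub_cancel_right]
    have := theta_nonneg w
    positivity
  | succ N hwN ih =>
    have hN : (0 : ℝ) < N := by exact_mod_cast hw.trans_le hwN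
    have hdiff : theta N / N ^ 2 - theta N / (N + 1) ^ 2 ≤ 2 * log 4 / N - 2 * log 4 / (N + 1) :=
      calc theta N / N ^ 2 - theta N / (N + 1) ^ 2
          = theta N * ((2 * N + 1) / (N ^ 2 * (N + 1) ^ 2)) := by field_simp; ring
        _ ≤ log 4 * N * ((2 * N + 2) / (N ^ 2 * (N + 1) ^ 2)) := by
          gcongr
          · exact theta_le_log4_mul_x hN.le
          · norm_num
        _ = 2 * log 4 / N - 2 * log 4 / (N + 1) := by field_simp; ring
    rw [← insert_Ioc_right_eq_Ioc_add_one (by omega), filter_insert, theta_eq_sum_primesLE_log,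
      Nat.primesLE_succ]
    split_ifs with hp
    · rw [sum_insert (by simp), sum_insert (by simp [Nat.mem_primesLE]),
        ← theta_eq_sum_primesLE_log, Nat.cast_add_one, add_div]
      linarith
    · rw [← theta_eq_sum_primesLE_log, Nat.cast_add_one]
      linarith

theorem sum_log_div_sq_le {w : ℕ} (hw : 0 < w) (N : ℕ) :
    ∑ p ∈ Ioc w N with p.Prime, log p / p ^ 2 ≤ 3 * log 4 / w := by
  have hlog : 0 ≤ log 4 := log_nonneg (by norm_num)
  obtain hlt | hN := lt_or_ge N w
  · rw [Ioc_eq_empty_of_le hlt.le, filter_empty, sum_empty]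
    positivity
  have : (0 : ℝ) < w := by exact_mod_cast hw
  have hN₀ : (0 : ℝ) < N := by exact_mod_cast hw.trans_le hN
  have htheta : theta N / N ^ 2 ≤ log 4 / N := by
    rw [sq, ← div_div]
    gcongr
    exact (div_le_iff₀ hN₀).mpr (theta_le_log4_mul_x hN₀.le)
  have hmono : log 4 / N ≤ log 4 / w := by gcongr
  calc _ ≤ theta N / N ^ 2 + 2 * log 4 / w - 2 * log 4 / N := sum_log_div_sq_le_sub hw hN
    _ ≤ log 4 / N + 2 * log 4 / w - 2 * log 4 / N := by gcongr
    _ ≤ 2 * log 4 / w + log 4 / w := by linarith [div_nonneg hlog hN₀.le, mul_div_assoc 2 (log 4) N]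
    _ = 3 * log 4 / w := by ring

end PrimeSums

section RoughNumbers

variable {k n : ℕ}

lemma nthPrime_le_of_not_dvd {p : ℕ} (hp : p.Prime) (hpn : p ∣ n)
    (h : ∀ i < k, ¬ nthPrime i ∣ n) : nthPrime k ≤ p := by
  rw [← nthPrime_count hp] at hpn ⊢
  exact strictMono_nthPrime.monotone (not_lt.mp fun hlt => h _ hlt hpn)

lemma length_primeFactorsList_mul_log_le (hn : n ≠ 0) (h : ∀ i < k, ¬ nthPrime i ∣ n) :
    n.primeFactorsList.length * log (nthPrime k) ≤ log n := by
  have hpow : nthPrime k ^ n.primeFactorsList.length ≤ n := by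
    conv_rhs => rw [← Nat.prod_primeFactorsList hn]
    exact List.pow_card_le_prod _ _ fun p hp => nthPrime_le_of_not_dvd
      (Nat.prime_of_mem_primeFactorsList hp) (Nat.dvd_of_mem_primeFactorsList hp) h
  rw [← log_pow]
  exact log_le_log (pow_pos (by exact_mod_cast (prime_nthPrime k).pos) _) (by exact_mod_cast hpow)

end RoughNumbers

section SieveLevel

open Finset Filter Topology

lemma eventually_exists_between_of_le_add {T : ℕ → ℝ} {δ : ℝ} {P : ℕ → Prop}
    (hT : Tendsto T atTop atTop) (hstep : ∀ᶠ k in atTop, T (k + 1) ≤ T k + δ)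
    (hP : ∀ᶠ k in atTop, P k) : ∀ᶠ x in atTop, ∃ k, P k ∧ T k ≤ x ∧ x - δ ≤ T k := by
  obtain ⟨k₀, hk₀⟩ := eventually_atTop.mp (hstep.and hP)
  filter_upwards [eventually_ge_atTop (T k₀)] with x hx
  by_contra! hgap
  have hle (k : ℕ) (hk : k₀ ≤ k) : T k ≤ x := by
    induction k, hk using Nat.le_induction with
    | base => exact hx
    | succ k hk ih => linarith [hgap k (hk₀ k hk).2 ih, (hk₀ k hk).1]
  obtain ⟨k, hk, hxk⟩ := ((eventually_ge_atTop k₀).and (hT.eventually_gt_atTop x)).exists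
  exact (hle k hk).not_gt hxk

lemma div_sievingDensity_succ_le {κ C₀ : ℝ} {k : ℕ}
    (h : |κ / sievingDensity k - log (nthPrime k)| ≤ C₀) :
    κ / sievingDensity (k + 1) ≤ κ / sievingDensity k + (1 + C₀) := by
  have hp : (2 : ℝ) ≤ nthPrime k := by exact_mod_cast two_le_nthPrime k
  have hp₁ : (0 : ℝ) < nthPrime k - 1 := by linarith
  have hV := sievingDensity_pos k
  have hstep : κ / sievingDensity (k + 1) =
      κ / sievingDensity k + κ / sievingDensity k / (nthPrime k - 1) := by
    rw [sievingDensity_succ, one_sub_div (by linarith)]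
    field_simp
    ring
  rw [hstep, add_le_add_iff_left, div_le_iff₀ hp₁]
  have hC₀ : 0 ≤ C₀ := (abs_nonneg _).trans h
  nlinarith [(abs_le.mp h).2, log_le_sub_one_of_pos (zero_lt_two.trans_le hp)]

variable {c v M m A X u : ℝ} {k : ℕ}

lemma SieveEstimate.card_sifted_le
    (h : SieveEstimate 1 c (fun s => v * upperFun s + M * v ^ 3) (1 / 8) v A k) (hc : 0 ≤ c)
    (hM : 0 ≤ M) (hv : 0 ≤ v) (hv₁ : v ≤ 1) (hu : 0 ≤ u) (hX : 0 < X)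
    (hs : 1 / 8 ≤ (log X - A) * v) : #(sifted u X k) ≤ c * X * ((8 + M) * v) := by
  have hF : upperFun ((log X - A) * v) ≤ 8 := by
    have hle := antitoneOn_upperFun (by norm_num : (0 : ℝ) < 1 / 8)
      ((by norm_num : (0 : ℝ) < 1 / 8).trans_le hs) hs
    rwa [upperFun_of_le_three (s := 1 / 8) (by norm_num), one_div_one_div] at hle
  have hcube : v ^ 3 ≤ v := pow_le_of_le_one hv hv₁ three_ne_zero
  calc (#(sifted u X k) : ℝ) = 1 * #(sifted u X k) := (one_mul _).symm
    _ ≤ c * X * (v * upperFun ((log X - A) * v) + M * v ^ 3) := h u X hu hX hs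
    _ ≤ c * X * (v * 8 + M * v) := by gcongr
    _ = c * X * ((8 + M) * v) := by ring

lemma SieveEstimate.le_card_sifted
    (h : SieveEstimate (-1) c (fun s => v * -lowerFun s + M * v ^ 3) 2 v A k) (hc : 0 ≤ c)
    (hm : ∀ s, 2 ≤ s → s ≤ 16 → m * (s - 2) ≤ lowerFun s) (hm₀ : 0 ≤ m) (hv : 0 ≤ v)
    (hMv : M * v ≤ m / 2) (hu : 0 ≤ u) (hX : 0 < X) (hs : 2 + v ≤ (log X - A) * v)
    (hs₁ : (log X - A) * v ≤ 16) : c * X * (m / 2 * v ^ 2) ≤ #(sifted u X k) := by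
  have hf : m * v ≤ lowerFun ((log X - A) * v) :=
    (mul_le_mul_of_nonneg_left (by linarith) hm₀).trans (hm _ (by linarith) hs₁)
  have hest := h u X hu hX (by linarith)
  calc c * X * (m / 2 * v ^ 2) = c * X * (v * (m * v) - m / 2 * v ^ 2) := by ring
    _ ≤ c * X * (v * lowerFun ((log X - A) * v) - M * v * v ^ 2) := by gcongr
    _ ≤ #(sifted u X k) := by linarith

theorem exists_eventually_sieveEstimate :
    ∃ C₀ c M A : ℝ, 0 < c ∧ 0 ≤ M ∧ ∀ᶠ y in atTop, ∃ k v, 0 < v ∧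
      |1 / v - log (nthPrime k)| ≤ C₀ ∧
      1 / v ≤ (log y - A - 1) / 2 ∧ (log y - A - 1) / 2 - (1 + C₀) ≤ 1 / v ∧
      SieveEstimate 1 c (fun s => v * upperFun s + M * v ^ 3) (1 / 8) v A k ∧
      SieveEstimate (-1) c (fun s => v * -lowerFun s + M * v ^ 3) 2 v A k := by
  obtain ⟨κ, C₀, c, M, A, hκ, hc, hM, hest⟩ := exists_uniform_sieveEstimate
  have hT : Tendsto (fun k => κ / sievingDensity k) atTop atTop :=
    tendsto_of_abs_sub_log_nthPrime_le (hest.mono fun k hk => hk.1)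
  have hlevel := eventually_exists_between_of_le_add hT
    (hest.mono fun k hk => div_sievingDensity_succ_le hk.1) hest
  have hhalf : Tendsto (fun y => (log y - A - 1) / 2) atTop atTop :=
    (tendsto_atTop_add_const_right _ _
      (tendsto_atTop_add_const_right _ _ tendsto_log_atTop)).atTop_div_const two_pos
  refine ⟨C₀, c, M, A, hc, hM, (hhalf.eventually hlevel).mono fun y hy => ?_⟩
  obtain ⟨k, ⟨hdiscrepancy, hupper, hlower⟩, hT_le, hle_T⟩ := hy
  rw [← one_div_div (sievingDensity k)] at hdiscrepancy hT_le hle_T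
  exact ⟨k, _, div_pos (sievingDensity_pos k) hκ, hdiscrepancy, hT_le, hle_T, hupper, hlower⟩

theorem exists_sifted_bounds :
    ∃ c C C' : ℝ, 0 < c ∧ 0 < C ∧ ∀ᶠ y in atTop, ∃ k, log y / 2 - C' ≤ log (nthPrime k) ∧
      (∀ u, 0 ≤ u → c * y / log y ^ 2 ≤ #(sifted u y k)) ∧
      ∀ u X, 0 ≤ u → 0 < X → y ≤ X ^ 4 → #(sifted u X k) ≤ C * X / log y := by
  obtain ⟨C₀, c, M, A, hc, hM, hest⟩ := exists_eventually_sieveEstimate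
  obtain ⟨m, hm, hm_le⟩ := exists_linear_increase_lowerFun 16
  refine ⟨c * (m / 2), c * (8 + M) * 3, (A + 1) / 2 + (1 + C₀) + C₀, by positivity, by positivity,
    ?_⟩
  filter_upwards [hest, eventually_gt_atTop 0,
    tendsto_log_atTop.eventually_ge_atTop (8 * |A| + 20 * |C₀| + 20 + 6 * (M / m))]
    with y ⟨k, v, hv, hdiscrepancy, hT_le, hle_T, hupper, hlower⟩ hy hL
  have hTv : 1 / v * v = 1 := one_div_mul_cancel hv.ne'
  have hA := abs_le.mp (le_refl |A|)
  have hC₀ := abs_le.mp (le_refl |C₀|)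
  have hMm : 0 ≤ M / m := by positivity
  have hL₀ : 0 < log y := by linarith
  have hv_le : v ≤ 3 / log y := by
    rw [← one_div_div, le_one_div hv (by positivity)]
    linarith
  refine ⟨k, by linarith [(abs_le.mp hdiscrepancy).2], fun u hu => ?_, fun u X hu hX hyX => ?_⟩
  · have hle_v : 1 / log y ≤ v := (one_div_le hL₀ hv).mpr (by linarith)
    calc c * (m / 2) * y / log y ^ 2 = c * y * (m / 2 * (1 / log y) ^ 2) := by ring
      _ ≤ c * y * (m / 2 * v ^ 2) := by gcongr
      _ ≤ #(sifted u y k) := ?_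
    refine hlower.le_card_sifted hc.le (fun s hs hs₁ => ?_) hm.le hv.le ?_ hu hy ?_ ?_
    · simpa only [lowerFun_of_le_two le_rfl, zero_add] using hm_le 2 s le_rfl hs hs₁
    · have hMm_le : M / m ≤ 1 / v / 2 := by linarith
      calc M * v = M / m * m * v := by rw [div_mul_cancel₀ _ hm.ne']
        _ ≤ 1 / v / 2 * m * v := by gcongr
        _ = m / 2 := by linear_combination m / 2 * hTv
    · calc 2 + v = (2 * (1 / v) + 1) * v := by rw [add_mul, mul_assoc, hTv]; ring
        _ ≤ (log y - A) * v := by gcongr; linarith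
    · calc (log y - A) * v ≤ 16 * (1 / v) * v := by gcongr; linarith
        _ = 16 := by rw [mul_assoc, hTv, mul_one]
  · have hlogX : log y ≤ 4 * log X := by
      rw [← Nat.cast_ofNat, ← log_pow]
      exact log_le_log hy hyX
    calc (#(sifted u X k) : ℝ) ≤ c * X * ((8 + M) * v) := ?_
      _ ≤ c * X * ((8 + M) * (3 / log y)) := by gcongr
      _ = c * (8 + M) * 3 * X / log y := by ring
    refine hupper.card_sifted_le hc.le hM hv.le ?_ hu hX ?_
    · exact (one_le_div hv).mp (by linarith)
    · calc (1 / 8 : ℝ) = 1 / 8 * (1 / v) * v := by rw [mul_assoc, hTv, mul_one]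
        _ ≤ (log X - A) * v := by gcongr; linarith

end SieveLevel

section CoprimeSubset

open Finset Filter Topology

variable {u y : ℝ} {k : ℕ}

lemma card_offDiag_sifted_not_coprime_le (hu : 0 ≤ u) (hy : 0 ≤ y) (k : ℕ) :
    #{x ∈ (sifted u y k).offDiag | ¬ x.1.Coprime x.2} ≤
      ∑ p ∈ Ioc (nthPrime k - 1) ⌊y⌋₊ with p.Prime, #(sifted (u / p) (y / p) k) ^ 2 := by
  have hle {p m n : ℕ} (hm : m ∈ sifted u y k) (hn : n ∈ sifted u y k) (hmn : m < n)
      (hpm : p ∣ m) (hpn : p ∣ n) : p ≤ ⌊y⌋₊ := by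
    have hp : p + m ≤ n := by
      have := Nat.le_of_dvd (Nat.sub_pos_of_lt hmn) (Nat.dvd_sub hpn hpm)
      omega
    have hp' : (p : ℝ) + m ≤ n := by exact_mod_cast hp
    exact Nat.le_floor (by linarith [((mem_sifted hu hy).mp hm).1.1,
      ((mem_sifted hu hy).mp hn).1.2])
  calc #{x ∈ (sifted u y k).offDiag | ¬ x.1.Coprime x.2}
      ≤ #(({p ∈ Ioc (nthPrime k - 1) ⌊y⌋₊ | p.Prime}).biUnion fun p =>
          {n ∈ sifted u y k | p ∣ n} ×ˢ {n ∈ sifted u y k | p ∣ n}) := card_le_card ?_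
    _ ≤ ∑ p ∈ Ioc (nthPrime k - 1) ⌊y⌋₊ with p.Prime,
          #({n ∈ sifted u y k | p ∣ n} ×ˢ {n ∈ sifted u y k | p ∣ n}) := card_biUnion_le
    _ = _ := sum_congr rfl fun p hp => ?_
  · rintro ⟨m, n⟩ hmn
    obtain ⟨hmem, hcoprime⟩ := mem_filter.mp hmn
    obtain ⟨hm, hn, hne⟩ := mem_offDiag.mp hmem
    obtain ⟨p, hp, hpm, hpn⟩ := Nat.Prime.not_coprime_iff_dvd.mp hcoprime
    have hkp := nthPrime_le_of_not_dvd hp hpm ((mem_sifted hu hy).mp hm).2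
    have hpy : p ≤ ⌊y⌋₊ := hne.lt_or_gt.elim (hle hm hn · hpm hpn) (hle hn hm · hpn hpm)
    have hp₀ := hp.pos
    exact mem_biUnion.mpr ⟨p, mem_filter.mpr ⟨mem_Ioc.mpr ⟨by omega, hpy⟩, hp⟩,
      mem_product.mpr ⟨mem_filter.mpr ⟨hm, hpm⟩, mem_filter.mpr ⟨hn, hpn⟩⟩⟩
  · obtain ⟨hpmem, hprime⟩ := mem_filter.mp hp
    have hkp : nthPrime k ≤ p := by have := (mem_Ioc.mp hpmem).1; omega
    rw [card_product, card_filter_dvd_sifted hu hy hprime hkp, sq]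

/-- For `p ≤ y / t` the sieve bound `hupper` applies to the multiples of `p`; beyond that the
trivial bound `y / p + 1` is enough. -/
lemma sq_card_sifted_div_le {B t : ℝ} {p : ℕ} (hu : 0 ≤ u) (ht : 0 < t) (hyt : 3 ≤ y / t)
    (hupper : ∀ u X, 0 ≤ u → 0 < X → t ≤ X → #(sifted u X k) ≤ B * X)
    (hkp : nthPrime k ≤ p) (hpy : p ≤ y) :
    (#(sifted (u / p) (y / p) k) : ℝ) ^ 2 ≤
      B ^ 2 * y ^ 2 / log (nthPrime k) * (log p / p ^ 2) +
        if ⌊y / t⌋₊ < p then 4 * y ^ 2 * (log p / p ^ 2) else 0 := by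
  have hlogk := log_nthPrime_pos k
  have hk₀ : (0 : ℝ) < nthPrime k := by exact_mod_cast (prime_nthPrime k).pos
  have hkp' : (nthPrime k : ℝ) ≤ p := by exact_mod_cast hkp
  have hp : (0 : ℝ) < p := hk₀.trans_le hkp'
  have hy : 0 < y := hp.trans_le hpy
  have hlog : log (nthPrime k) ≤ log p := log_le_log hk₀ hkp'
  have hlogp : 0 < log p := hlogk.trans_le hlog
  split_ifs with hlt
  · have hytp : y / t < p := (Nat.floor_lt (by linarith)).mp hlt
    have hlogp₁ : 1 ≤ log p := by
      rw [le_log_iff_exp_le hp]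
      exact exp_one_lt_three.le.trans (hyt.trans hytp.le)
    have hyp : 1 ≤ y / p := (one_le_div hp).mpr hpy
    have hcard : #(sifted (u / p) (y / p) k) ≤ 2 * (y / p) :=
      (card_sifted_le (by positivity) (by positivity) k).trans (by linarith)
    calc (#(sifted (u / p) (y / p) k) : ℝ) ^ 2 ≤ (2 * (y / p)) ^ 2 := by gcongr
      _ = 4 * y ^ 2 * (1 / p ^ 2) := by ring
      _ ≤ 4 * y ^ 2 * (log p / p ^ 2) := by gcongr
      _ ≤ _ := le_add_of_nonneg_left (by positivity)
  · have htp : t ≤ y / p := by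
      rw [le_div_comm₀ ht hp]
      exact Nat.cast_le.mpr (not_lt.mp hlt) |>.trans (Nat.floor_le (by linarith))
    rw [add_zero]
    calc (#(sifted (u / p) (y / p) k) : ℝ) ^ 2 ≤ (B * (y / p)) ^ 2 := by
          gcongr
          exact hupper _ _ (by positivity) (by positivity) htp
      _ = B ^ 2 * y ^ 2 / log (nthPrime k) * (log (nthPrime k) / p ^ 2) := by
        field_simp
      _ ≤ B ^ 2 * y ^ 2 / log (nthPrime k) * (log p / p ^ 2) := by gcongr

lemma card_offDiag_sifted_not_coprime_le_of_upper {B t : ℝ} (hu : 0 ≤ u) (ht : 0 < t)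
    (hyt : 3 ≤ y / t) (hupper : ∀ u X, 0 ≤ u → 0 < X → t ≤ X → #(sifted u X k) ≤ B * X) :
    #{x ∈ (sifted u y k).offDiag | ¬ x.1.Coprime x.2} ≤
      6 * log 4 * (B ^ 2 * y ^ 2 / (log (nthPrime k) * nthPrime k) + 4 * (y * t)) := by
  have hy : 0 < y := by
    have := (le_div_iff₀ ht).mp hyt
    linarith
  have hk₂ := two_le_nthPrime k
  have hk : (2 : ℝ) ≤ nthPrime k := by exact_mod_cast hk₂
  have hlogk := log_nthPrime_pos k
  have hlog4 : 0 ≤ log 4 := log_nonneg (by norm_num)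
  have hsum {w : ℕ} {z : ℝ} (hz : 2 ≤ z) (hzw : z - 1 ≤ w) :
      ∑ p ∈ Ioc w ⌊y⌋₊ with p.Prime, log p / p ^ 2 ≤ 6 * log 4 / z := by
    have hw : (0 : ℝ) < w := by linarith
    refine (sum_log_div_sq_le (by exact_mod_cast hw) _).trans ?_
    rw [div_le_div_iff₀ hw (by linarith)]
    nlinarith
  have hfloor := Nat.lt_floor_add_one (y / t)
  calc (#{x ∈ (sifted u y k).offDiag | ¬ x.1.Coprime x.2} : ℝ)
      ≤ ∑ p ∈ Ioc (nthPrime k - 1) ⌊y⌋₊ with p.Prime, (#(sifted (u / p) (y / p) k) : ℝ) ^ 2 := by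
        exact_mod_cast card_offDiag_sifted_not_coprime_le hu hy.le k
    _ ≤ ∑ p ∈ Ioc (nthPrime k - 1) ⌊y⌋₊ with p.Prime,
          (B ^ 2 * y ^ 2 / log (nthPrime k) * (log p / p ^ 2) +
            if ⌊y / t⌋₊ < p then 4 * y ^ 2 * (log p / p ^ 2) else 0) := by
        refine sum_le_sum fun p hp => ?_
        obtain ⟨hkp, hpy⟩ := mem_Ioc.mp (mem_filter.mp hp).1
        exact sq_card_sifted_div_le hu ht hyt hupper (by omega)
          ((Nat.cast_le.mpr hpy).trans (Nat.floor_le hy.le))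
    _ = B ^ 2 * y ^ 2 / log (nthPrime k) *
            ∑ p ∈ Ioc (nthPrime k - 1) ⌊y⌋₊ with p.Prime, log p / p ^ 2 +
          4 * y ^ 2 * ∑ p ∈ Ioc (nthPrime k - 1) ⌊y⌋₊ with p.Prime ∧ ⌊y / t⌋₊ < p,
            log p / p ^ 2 := by
        rw [sum_add_distrib, ← sum_filter, filter_filter, mul_sum, mul_sum]
    _ ≤ B ^ 2 * y ^ 2 / log (nthPrime k) * (6 * log 4 / nthPrime k) +
          4 * y ^ 2 * (6 * log 4 / (y / t)) := by
        gcongr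
        · exact hsum hk (by rw [Nat.cast_pred (prime_nthPrime k).pos])
        · refine (sum_le_sum_of_subset_of_nonneg (fun p hp => ?_) fun p _ _ => ?_).trans
            (hsum (w := ⌊y / t⌋₊) (by linarith) (by linarith))
          · simp only [mem_filter, mem_Ioc] at hp ⊢
            exact ⟨⟨hp.2.2, hp.1.2⟩, hp.2.1⟩
          · exact div_nonneg (log_natCast_nonneg p) (sq_nonneg _)
    _ = _ := by field_simp

lemma sq_le_mul_add_of_le {a N₀ N D : ℝ} (ha : 0 ≤ a) (hN₀ : 0 < N₀) (hN : N₀ ≤ N) (hD : 0 ≤ D)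
    (h : N ^ 2 ≤ a * (N + D)) : N₀ ^ 2 ≤ a * (N₀ + D) := by
  have hN' : 0 < N := hN₀.trans_le hN
  have hratio : (N + D) / N ^ 2 ≤ (N₀ + D) / N₀ ^ 2 := by
    rw [add_div, add_div, sq N, div_mul_cancel_left₀ hN'.ne', sq N₀, div_mul_cancel_left₀ hN₀.ne']
    gcongr
  rw [← one_le_div (by positivity), mul_div_assoc] at h ⊢
  exact h.trans (by gcongr)

lemma sqrt_mul_exp_neg_le {a b : ℝ} (hy : 0 < y) (ha : 0 < a) (h : log y / 2 - b ≤ log a) :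
    √y * exp (-b) ≤ a := by
  have hs : 0 < √y := sqrt_pos.mpr hy
  rw [← log_le_log_iff (by positivity) ha, log_mul hs.ne' (exp_ne_zero _), log_exp, log_sqrt hy.le]
  linarith

lemma card_offDiag_sifted_not_coprime_le_cube {C C' : ℝ} (hu : 0 ≤ u) (hy : 9 ≤ y)
    (hlog : log y ^ 3 ≤ √√y) (hC' : 4 * C' ≤ log y) (hk : log y / 2 - C' ≤ log (nthPrime k))
    (hupper : ∀ u X, 0 ≤ u → 0 < X → y ≤ X ^ 4 → #(sifted u X k) ≤ C * X / log y) :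
    #{x ∈ (sifted u y k).offDiag | ¬ x.1.Coprime x.2} ≤
      24 * log 4 * (C ^ 2 * exp C' + 1) * (√y / log y) ^ 3 := by
  have hy₀ : 0 < y := by linarith
  have hL : 0 < log y := log_pos (by linarith)
  have : 0 ≤ log 4 := log_nonneg (by norm_num)
  have hs : 3 ≤ √y := by rw [le_sqrt (by norm_num) hy₀.le]; linarith
  have hs₀ : 0 < √y := by linarith
  have hsq : √y ^ 2 = y := sq_sqrt hy₀.le
  have ht : 0 < √√y := sqrt_pos.mpr hs₀
  have htsq : √√y ^ 2 = √y := sq_sqrt hs₀.le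
  have hyt : 3 ≤ y / √√y := by
    rw [le_div_iff₀ ht]
    calc 3 * √√y ≤ √y * √y := by
          gcongr
          exact sqrt_le_self_iff.mpr (.inr (by linarith))
      _ = y := by rw [← sq, hsq]
  have hp : √y * exp (-C') ≤ nthPrime k :=
    sqrt_mul_exp_neg_le hy₀ (by exact_mod_cast (prime_nthPrime k).pos) hk
  have hlast : y * √√y ≤ (√y / log y) ^ 3 := by
    rw [div_pow, le_div_iff₀ (by positivity)]
    calc y * √√y * log y ^ 3 ≤ y * √√y * √√y := by gcongr
      _ = √y ^ 3 := by rw [mul_assoc, ← sq, htsq, pow_succ, hsq]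
  calc (#{x ∈ (sifted u y k).offDiag | ¬ x.1.Coprime x.2} : ℝ)
      ≤ 6 * log 4 * ((C / log y) ^ 2 * y ^ 2 / (log (nthPrime k) * nthPrime k) +
          4 * (y * √√y)) := by
        refine card_offDiag_sifted_not_coprime_le_of_upper hu ht hyt fun u X hu hX htX => ?_
        rw [div_mul_eq_mul_div]
        refine hupper u X hu hX ?_
        calc y = √√y ^ 4 := by rw [pow_mul √√y 2 2, htsq, hsq]
          _ ≤ X ^ 4 := by gcongr
    _ ≤ 6 * log 4 * ((C / log y) ^ 2 * y ^ 2 / (log y / 4 * (√y * exp (-C'))) +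
          4 * (√y / log y) ^ 3) := by
        gcongr
        linarith
    _ = 24 * log 4 * (C ^ 2 * exp C' + 1) * (√y / log y) ^ 3 := by
        nth_rewrite 2 [← hsq]
        rw [exp_neg]
        field_simp
        ring

lemma eventually_log_pow_three_le_sqrt_sqrt : ∀ᶠ y in atTop, log y ^ 3 ≤ √√y := by
  have hsqrt : Tendsto (fun y : ℝ => √√y) atTop atTop := tendsto_sqrt_atTop.comp tendsto_sqrt_atTop
  filter_upwards [(isLittleO_pow_log_id_atTop (n := 3)).comp_tendsto hsqrt |>.bound
    (by norm_num : (0 : ℝ) < 1 / 64), eventually_ge_atTop 1] with y hbound hy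
  have hlog : 0 ≤ log (√√y) := log_nonneg (one_le_sqrt.mpr (one_le_sqrt.mpr hy))
  have hquarter : log y = 4 * log √√y := by
    rw [log_sqrt (sqrt_nonneg y), log_sqrt (by linarith)]
    ring
  simp only [Function.comp_apply, id, norm_pow, norm_of_nonneg hlog,
    norm_of_nonneg (sqrt_nonneg √y)] at hbound
  rw [hquarter, mul_pow]
  linarith

theorem exists_coprime_subset_sifted :
    ∃ c C' : ℝ, 0 < c ∧ 0 < C' ∧ ∀ᶠ y in atTop, ∃ k, log y / 2 - C' ≤ log (nthPrime k) ∧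
      ∀ u, 0 ≤ u → ∃ S ⊆ sifted u y k, (S : Set ℕ).Pairwise Nat.Coprime ∧
        c * √y / log y ≤ #S := by
  obtain ⟨c, C, C', hc, hC, hbounds⟩ := exists_sifted_bounds
  have : 0 < log 4 := log_pos (by norm_num)
  set D := 24 * log 4 * (C ^ 2 * exp C' + 1) with hD
  have hD₀ : 0 < D := by positivity
  refine ⟨c ^ 2 / (c + D), max C' 1, by positivity, by positivity, ?_⟩
  filter_upwards [hbounds, eventually_ge_atTop 9, eventually_log_pow_three_le_sqrt_sqrt,
    tendsto_log_atTop.eventually_ge_atTop (4 * C'), tendsto_log_atTop.eventually_ge_atTop 1]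
    with y ⟨k, hk, hlower, hupper⟩ hy hlog hC' hL
  refine ⟨k, by linarith [le_max_left C' 1], fun u hu => ?_⟩
  obtain ⟨S, hS, hcoprime, hcard⟩ := exists_pairwise_subset Nat.Coprime (sifted u y k)
  refine ⟨S, hS, hcoprime, ?_⟩
  set q := √y / log y with hq
  have hq₁ : 1 ≤ q := by
    rw [one_le_div (by linarith)]
    calc log y ≤ log y ^ 3 := le_self_pow₀ hL three_ne_zero
      _ ≤ √√y := hlog
      _ ≤ √y := sqrt_le_self_iff.mpr (.inr (one_le_sqrt.mpr (by linarith)))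
  have hqsq : c * y / log y ^ 2 = c * q ^ 2 := by
    rw [hq, div_pow, sq_sqrt (by linarith), mul_div_assoc]
  have hturan : (#(sifted u y k) : ℝ) ^ 2 ≤ #S * (#(sifted u y k) + D * q ^ 3) :=
    calc (#(sifted u y k) : ℝ) ^ 2 ≤ #S * (#(sifted u y k) +
          #{x ∈ (sifted u y k).offDiag | ¬ x.1.Coprime x.2}) := by exact_mod_cast hcard
      _ ≤ _ := by
        gcongr
        exact card_offDiag_sifted_not_coprime_le_cube hu hy hlog hC' hk hupper
  have hmain : (c * q ^ 2) ^ 2 ≤ #S * ((c + D) * q ^ 3) :=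
    calc (c * q ^ 2) ^ 2 ≤ #S * (c * q ^ 2 + D * q ^ 3) :=
          sq_le_mul_add_of_le (by positivity) (by positivity) (hqsq ▸ hlower u hu)
            (by positivity) hturan
      _ ≤ #S * (c * q ^ 3 + D * q ^ 3) := by
        gcongr
        norm_num
      _ = _ := by ring
  rw [← div_le_iff₀ (by positivity)] at hmain
  refine le_trans (le_of_eq ?_) hmain
  rw [mul_div_assoc, ← hq]
  field_simp

lemma le_two_mul_div_add_of_mul_le {a C' ℓ L : ℝ} (hC' : 0 < C') (hL : 4 * C' ≤ L) (hℓ : 0 ≤ ℓ)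
    (h : a * (L / 2 - C') ≤ ℓ) : a ≤ 2 * ℓ / L + 8 * C' * ℓ / L ^ 2 := by
  have hL₀ : 0 < L := by linarith
  calc a ≤ ℓ / (L / 2 - C') := (le_div_iff₀ (by linarith)).mpr h
    _ ≤ 2 * ℓ / L + 8 * C' * ℓ / L ^ 2 := ?_
  rw [div_le_iff₀ (by linarith), ← sub_nonneg]
  have : (2 * ℓ / L + 8 * C' * ℓ / L ^ 2) * (L / 2 - C') - ℓ =
      2 * C' * ℓ * (L - 4 * C') / L ^ 2 := by
    field_simp
    ring
  rw [this]
  have := sub_nonneg.mpr hL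
  positivity

theorem exists_coprime_subset_few_prime_factors :
    ∃ c C : ℝ, 0 < c ∧ 0 < C ∧ ∀ᶠ y : ℝ in atTop, ∀ u : ℝ, 0 ≤ u → ∃ S : Finset ℕ,
      (∀ n ∈ S, u < n ∧ n ≤ u + y) ∧ (S : Set ℕ).Pairwise Nat.Coprime ∧ c * √y / log y ≤ #S ∧
      ∀ n ∈ S, (n.primeFactorsList.length : ℝ) ≤ 2 * log n / log y + C * log n / log y ^ 2 := by
  obtain ⟨c, C', hc, hC', hsubset⟩ := exists_coprime_subset_sifted
  refine ⟨c, 8 * C', hc, by positivity, ?_⟩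
  filter_upwards [hsubset, eventually_ge_atTop 0,
    tendsto_log_atTop.eventually_ge_atTop (4 * C')] with y ⟨k, hk, hsubset⟩ hy hL u hu
  obtain ⟨S, hS, hcoprime, hcard⟩ := hsubset u hu
  have hmem {n : ℕ} (hn : n ∈ S) := (mem_sifted hu hy).mp (hS hn)
  refine ⟨S, fun n hn => (hmem hn).1, hcoprime, hcard, fun n hn => ?_⟩
  have hn₀ : n ≠ 0 := by
    have := hu.trans_lt (hmem hn).1.1
    exact_mod_cast this.ne'
  refine le_two_mul_div_add_of_mul_le hC' hL (log_natCast_nonneg n) ?_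
  calc n.primeFactorsList.length * (log y / 2 - C')
      ≤ n.primeFactorsList.length * log (nthPrime k) := by gcongr
    _ ≤ log n := length_primeFactorsList_mul_log_le hn₀ (hmem hn).2

end CoprimeSubset

end LinearSieve

/-- For sufficiently large y, any interval [x−y, x] with x ≥ y+1 contains a pairwise
coprime set of size ≫ √y/log y all of whose elements n satisfy
Ω(n) ≤ 2 log x / log y + O(log x / (log y)²). -/
theorem coprime_subset_with_few_prime_factors :
    ∃ c : ℝ, 0 < c ∧ ∃ C : ℝ, 0 < C ∧ ∃ Y : ℝ, ∀ y : ℝ, Y ≤ y → ∀ x : ℝ, y + 1 ≤ x →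
      ∃ S : Finset ℕ,
        (∀ n ∈ S, 0 < n ∧ x - y ≤ (n : ℝ) ∧ (n : ℝ) ≤ x) ∧
        (∀ m ∈ S, ∀ n ∈ S, m ≠ n → Nat.Coprime m n) ∧
        c * Real.sqrt y / log y ≤ (S.card : ℝ) ∧
        (∀ n ∈ S, ((n.primeFactorsList.length : ℝ)) ≤
          2 * log x / log y + C * log x / (log y) ^ 2) := by
  obtain ⟨c, C, hc, hC, hlarge⟩ := LinearSieve.exists_coprime_subset_few_prime_factors
  obtain ⟨Y, hY⟩ := Filter.eventually_atTop.mp (hlarge.and (Filter.eventually_gt_atTop 1))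
  refine ⟨c, hc, C, hC, Y, fun y hYy x hyx => ?_⟩
  obtain ⟨hlarge, hy⟩ := hY y hYy
  obtain ⟨S, hmem, hcoprime, hcard, hfactors⟩ := hlarge (x - y) (by linarith)
  have hpos (n : ℕ) (hn : n ∈ S) : (0 : ℝ) < n := by linarith [(hmem n hn).1]
  have hle (n : ℕ) (hn : n ∈ S) : (n : ℝ) ≤ x := by linarith [(hmem n hn).2]
  refine ⟨S, fun n hn => ⟨Nat.cast_pos.mp (hpos n hn), (hmem n hn).1.le, hle n hn⟩,
    fun m hm n hn hmn => hcoprime hm hn hmn, hcard, fun n hn => (hfactors n hn).trans ?_⟩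
  have hlogy : 0 < log y := log_pos hy
  have hlog : log n ≤ log x := log_le_log (hpos n hn) (hle n hn)
  gcongr
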